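/- arXiv:2301.08320 — 3 statements merged into one kernel-verified Lean document; each statement's English description precedes it below -/
import Mathlib

section
/- Let m ≥ 0, d ≥ 1 be integers with 2m + d ≥ 3, let c > 0, and let α be a real number with α > c²/4. Set β := m + d/2, a := (2m+d−2)/(2m+d). Let φ be a real-valued C² solution on (−1,1) of ((1−η)(1+η)^β φ′(η))′ + (α − c²(1+η)/8)(1+η)^{β−1} φ(η) = 0 which extends continuously to (−1,1] and satisfies the normalization ∫_{−1}^{1} (1+t)^{β−1} φ(t)² dt = 2^{β−1}. Then sup_{η ∈ [a,1]} √((1−η)(1+η)^β) · |φ(η)| ≤ √(2^{β+1}(β−1)). -/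
open MeasureTheory Real
noncomputable section

/-- A function with nonpositive derivative lies above its limit at the right end. -/
lemma limit_le_of_deriv_nonpos {f f' : ℝ → ℝ} {a b L : ℝ}
    (hf : ∀ t ∈ Set.Ioo a b, HasDerivAt f (f' t) t)
    (hn : ∀ t ∈ Set.Ioo a b, f' t ≤ 0)
    (hL : Filter.Tendsto f (nhdsWithin b (Set.Iio b)) (nhds L))
    {t : ℝ} (ht : t ∈ Set.Ioo a b) : L ≤ f t := by
  have hanti : AntitoneOn f (Set.Ioo a b) := by
    apply antitoneOn_of_deriv_nonpos (convex_Ioo a b)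
    · intro x hx; exact (hf x hx).continuousAt.continuousWithinAt
    · rw [interior_Ioo]; intro x hx; exact (hf x hx).differentiableAt.differentiableWithinAt
    · rw [interior_Ioo]; intro x hx; rw [(hf x hx).deriv]; exact hn x hx
  refine le_of_tendsto hL ?_
  filter_upwards [Ioo_mem_nhdsLT ht.2] with x hx
  exact hanti ht ⟨ht.1.trans hx.1, hx.2⟩ hx.1.le

/-- A function with nonpositive derivative lies below its limit at the left end. -/
lemma le_limit_of_deriv_nonpos {f f' : ℝ → ℝ} {a b : ℝ}
    (hf : ∀ t ∈ Set.Ioo a b, HasDerivAt f (f' t) t)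
    (hn : ∀ t ∈ Set.Ioo a b, f' t ≤ 0)
    {s t : ℝ} (hs : s ∈ Set.Ioo a b) (ht : t ∈ Set.Ioo a b) (hst : s ≤ t) : f t ≤ f s := by
  have hanti : AntitoneOn f (Set.Ioo a b) := by
    apply antitoneOn_of_deriv_nonpos (convex_Ioo a b)
    · intro x hx; exact (hf x hx).continuousAt.continuousWithinAt
    · rw [interior_Ioo]; intro x hx; exact (hf x hx).differentiableAt.differentiableWithinAt
    · rw [interior_Ioo]; intro x hx; rw [(hf x hx).deriv]; exact hn x hx
  exact hanti hs ht hst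

lemma core_ineq (k δ x R s P : ℝ) (hk : 0 ≤ k) (hδ : 2 ≤ δ) (hx : 0 ≤ x) (hxR : x ≤ R)
    (hR : 2 / 3 ≤ R) (hR1 : R < 1) (hs : s = 1 - R) (hP : P = 1 - x) :
    6 * x * (k * P + δ + 1 / P) + x ^ 2 * (2 * δ / P + 4 / P ^ 2) + 3 * P
      ≤ 4 * R * (k + δ / s + 1 / s ^ 2) + 3 := by
  have hs0 : 0 < s := by linarith
  have hsP : s ≤ P := by linarith
  have hP0 : 0 < P := by linarith
  have h1 : 6 * x * (k * P) ≤ 4 * R * k := by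
    have : 6 * x * P ≤ 4 * R := by rw [hP]; nlinarith [sq_nonneg (x - 1/2)]
    nlinarith
  have hi : 1 / P ≤ 1 / s := one_div_le_one_div_of_le hs0 hsP
  have hi0 : 0 < 1 / P := by positivity
  have hxs : x * (1 / P) ≤ R * (1 / s) := by
    apply mul_le_mul hxR hi hi0.le (by linarith)
  have hx2 : x * (x * (1 / P)) ≤ R * (R * (1 / s)) := by
    apply mul_le_mul hxR hxs (by positivity) (by linarith)
  have hx3 : (x * (1 / P)) ^ 2 ≤ (R * (1 / s)) ^ 2 := by
    apply pow_le_pow_left₀ (by positivity) hxs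
  have e1 : 6 * x * (k * P + δ + 1 / P) + x ^ 2 * (2 * δ / P + 4 / P ^ 2) + 3 * P
      = 6 * x * (k * P) + (6 * δ - 3) * x + 6 * (x * (1 / P)) + 2 * δ * (x * (x * (1 / P)))
        + 4 * (x * (1 / P)) ^ 2 + 3 := by
    rw [hP] at hP0 ⊢; field_simp; ring
  have h2 : (6 * δ - 3) * x ≤ (6 * δ - 3) * R := by
    apply mul_le_mul_of_nonneg_left hxR; linarith
  have h3 : 2 * δ * (x * (x * (1 / P))) ≤ 2 * δ * (R * (R * (1 / s))) := by
    apply mul_le_mul_of_nonneg_left hx2; linarith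
  have h4 : (6 * δ - 3) * R + 6 * (R * (1 / s)) + 2 * δ * (R * (R * (1 / s)))
        + 4 * (R * (1 / s)) ^ 2 ≤ 4 * R * (δ / s + 1 / s ^ 2) := by
    have e2 : 4 * R * (δ / s + 1 / s ^ 2) - ((6 * δ - 3) * R + 6 * (R * (1 / s))
        + 2 * δ * (R * (R * (1 / s))) + 4 * (R * (1 / s)) ^ 2)
        = R / s * (δ * (2 - 4 * s) - (2 - 3 * s)) := by
      have : R = 1 - s := by linarith
      rw [this]; field_simp; ring
    have h5 : 0 ≤ R / s * (δ * (2 - 4 * s) - (2 - 3 * s)) := by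
      apply mul_nonneg
      · apply div_nonneg <;> linarith
      · nlinarith
    linarith
  rw [e1]
  nlinarith

set_option maxHeartbeats 4000000 in
/-- The one-dimensional (odd/even prolate) estimate. -/
lemma core (k δ T L : ℝ) (hk : 0 ≤ k) (hδ : 2 ≤ δ) (ψ U μ : ℝ → ℝ)
    (hψ : ∀ t ∈ Set.Ioo (0:ℝ) 1, HasDerivAt ψ (U t / (1 - t ^ 2)) t)
    (hU : ∀ t ∈ Set.Ioo (0:ℝ) 1, HasDerivAt U (-((k * (1 - t ^ 2) + δ) * ψ t)) t)
    (hμ : ∀ t ∈ Set.Ioo (0:ℝ) 1, HasDerivAt μ (ψ t ^ 2) t)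
    (hμ0 : Filter.Tendsto μ (nhdsWithin 0 (Set.Ioi 0)) (nhds 0))
    (hμ1 : Filter.Tendsto μ (nhdsWithin 1 (Set.Iio 1)) (nhds T))
    (hψ1 : Filter.Tendsto ψ (nhdsWithin 1 (Set.Iio 1)) (nhds L))
    (hU1 : Filter.Tendsto U (nhdsWithin 1 (Set.Iio 1)) (nhds 0))
    (r : ℝ) (hr : r ∈ Set.Ioo (0:ℝ) 1) (hr2 : 2 / 3 ≤ r ^ 2) :
    r * (1 - r ^ 2) * ψ r ^ 2 ≤ 2 * T := by
  have hPpos : ∀ t ∈ Set.Ioo (0:ℝ) 1, 0 < 1 - t ^ 2 := fun t ht => by nlinarith [ht.1, ht.2]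
  have hdP : ∀ t : ℝ, HasDerivAt (fun t : ℝ => 1 - t ^ 2) (-(2 * t)) t := fun t => by
    simpa using (hasDerivAt_pow 2 t).const_sub 1
  have hs0 := hPpos r hr
  set s := 1 - r ^ 2 with hs
  -- right estimate
  have hright : r * s * ψ r ^ 2 ≤ 4 * (T - μ r) := by
    set K := 2 * (k * s + δ) + 2 * k * s with hK
    have hV : ∀ t ∈ Set.Ioo (0:ℝ) 1, HasDerivAt
        (fun t => (1 - t ^ 2) * (k * (1 - t ^ 2) + δ) * ψ t ^ 2 + U t ^ 2 + K * μ t)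
        (-(2 * t * (k * (1 - t ^ 2) + δ) + 2 * k * t * (1 - t ^ 2)) * ψ t ^ 2 + K * ψ t ^ 2) t := by
      intro t ht
      have hP := hPpos t ht
      have := ((((hdP t).mul (((hdP t).const_mul k).add_const δ)).mul ((hψ t ht).pow 2)).add
        ((hU t ht).pow 2)).add ((hμ t ht).const_mul K)
      refine HasDerivAt.congr_deriv this ?_
      simp only [Pi.mul_apply, Pi.pow_apply, Pi.add_apply, Pi.div_apply, Pi.sub_apply]
      push_cast
      field_simp
      ring
    have hlim : Filter.Tendsto
        (fun t => (1 - t ^ 2) * (k * (1 - t ^ 2) + δ) * ψ t ^ 2 + U t ^ 2 + K * μ t)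
        (nhdsWithin 1 (Set.Iio 1)) (nhds ((1 - 1 ^ 2) * (k * (1 - 1 ^ 2) + δ) * L ^ 2 + 0 ^ 2 + K * T)) := by
      have hc : Filter.Tendsto (fun t : ℝ => (1 - t ^ 2) * (k * (1 - t ^ 2) + δ))
          (nhdsWithin 1 (Set.Iio 1)) (nhds ((1 - 1 ^ 2) * (k * (1 - 1 ^ 2) + δ))) := by
        apply Filter.Tendsto.mono_left _ nhdsWithin_le_nhds
        apply Continuous.tendsto
        fun_prop
      exact ((hc.mul (hψ1.pow 2)).add (hU1.pow 2)).add (hμ1.const_mul K)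
    -- W t ≤ K for t ≥ r
    have hneg : ∀ ε > 0, (1 - r ^ 2) * (k * (1 - r ^ 2) + δ) * ψ r ^ 2 + U r ^ 2 + K * μ r
        ≤ K * T + ε := by
      intro ε hε
      have hW : ∀ t ∈ Set.Ioo r 1, 0 ≤ -(2 * t * (k * (1 - t ^ 2) + δ) + 2 * k * t * (1 - t ^ 2))
          * ψ t ^ 2 + K * ψ t ^ 2 := by
        intro t ht
        have ht' : t ∈ Set.Ioo (0:ℝ) 1 := ⟨hr.1.trans ht.1, ht.2⟩
        have hP := hPpos t ht'
        have hPs : 1 - t ^ 2 ≤ s := by nlinarith [hr.1, ht.1]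
        have hkP : k * (1 - t ^ 2) ≤ k * s := mul_le_mul_of_nonneg_left hPs hk
        have hkP0 : 0 ≤ k * (1 - t ^ 2) := by positivity
        have : 2 * t * (k * (1 - t ^ 2) + δ) + 2 * k * t * (1 - t ^ 2) ≤ K := by
          rw [hK]; nlinarith [ht.2, ht'.1]
        nlinarith [sq_nonneg (ψ t)]
      -- monotone on (r,1), compare via continuity at r
      have hbelow : ∀ t ∈ Set.Ioo r 1, (1 - t ^ 2) * (k * (1 - t ^ 2) + δ) * ψ t ^ 2 + U t ^ 2
          + K * μ t ≤ K * T := by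
        intro t ht
        have := limit_le_of_deriv_nonpos (a := r) (b := 1)
          (f := fun t => -((1 - t ^ 2) * (k * (1 - t ^ 2) + δ) * ψ t ^ 2 + U t ^ 2 + K * μ t))
          (fun t ht => (hV t ⟨hr.1.trans ht.1, ht.2⟩).neg)
          (fun t ht => by have := hW t ht; linarith) hlim.neg ht
        norm_num at this ⊢
        linarith
      have hcr := (hV r hr).continuousAt.continuousWithinAt (s := Set.Ioi r)
      have : _ ≤ K * T := le_of_tendsto hcr (by
        filter_upwards [Ioo_mem_nhdsGT hr.2] with t ht using hbelow t ht)
      linarith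
    have h := le_of_forall_pos_le_add hneg
    rw [← hs] at h
    have hQ : 0 < k * s + δ := by nlinarith [mul_nonneg hk hs0.le]
    have hks : 0 ≤ k * s := by positivity
    have h1 : s * ψ r ^ 2 * (k * s + δ) ≤ K * (T - μ r) := by nlinarith [sq_nonneg (U r)]
    have hsψ : 0 ≤ s * ψ r ^ 2 := by positivity
    have hTm : 0 ≤ T - μ r := by
      have hK0 : 0 < K := by rw [hK]; linarith
      have : 0 ≤ K * (T - μ r) := le_trans (by positivity) h1
      exact nonneg_of_mul_nonneg_right this hK0
    have h2 : s * ψ r ^ 2 * (k * s + δ) ≤ 4 * (T - μ r) * (k * s + δ) := by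
      refine h1.trans ?_
      rw [hK]; nlinarith
    have h3 := le_of_mul_le_mul_right h2 hQ
    nlinarith [hr.2]
  -- left estimate
  have hleft : r * s * ψ r ^ 2 ≤ 4 * μ r := by
    set K := 4 * r ^ 2 * (k + δ / s + 1 / s ^ 2) + 3 with hK
    set V : ℝ → ℝ := fun t => t ^ 3 * (U t - t * ψ t) ^ 2 / (1 - t ^ 2)
        - 3 * t ^ 2 * ψ t * (U t - t * ψ t)
        + (t ^ 3 * (k + δ / (1 - t ^ 2) + 1 / (1 - t ^ 2) ^ 2) + 3 * t) * (1 - t ^ 2) * ψ t ^ 2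
      with hVdef
    set J : ℝ → ℝ := fun t => (U t - t * ψ t) ^ 2 / (1 - t ^ 2)
        + (k * (1 - t ^ 2) + δ + 1 / (1 - t ^ 2)) * ψ t ^ 2 with hJdef
    have hZ : ∀ t ∈ Set.Ioo (0:ℝ) 1, HasDerivAt (fun t => U t - t * ψ t)
        (-((k * (1 - t ^ 2) + δ) * ψ t) - (1 * ψ t + t * (U t / (1 - t ^ 2)))) t :=
      fun t ht => (hU t ht).sub ((hasDerivAt_id' t).mul (hψ t ht))
    have hone : ∀ t : ℝ, HasDerivAt (fun _ : ℝ => (1:ℝ)) 0 t := fun t => hasDerivAt_const t 1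
    have hJ : ∀ t ∈ Set.Ioo (0:ℝ) 1, HasDerivAt J
        ((2 * t * δ / (1 - t ^ 2) + 4 * t / (1 - t ^ 2) ^ 2) * ψ t ^ 2) t := by
      intro t ht
      have hP := hPpos t ht
      have := (((hZ t ht).pow 2).div (hdP t) hP.ne').add
        (((((hdP t).const_mul k).add_const δ).add ((hone t).div (hdP t) hP.ne')).mul ((hψ t ht).pow 2))
      refine HasDerivAt.congr_deriv this ?_
      simp only [Pi.mul_apply, Pi.pow_apply, Pi.add_apply, Pi.div_apply, Pi.sub_apply]
      push_cast
      field_simp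
      ring
    have hV : ∀ t ∈ Set.Ioo (0:ℝ) 1, HasDerivAt V
        ((6 * t ^ 2 * (k * (1 - t ^ 2) + δ + 1 / (1 - t ^ 2))
          + (t ^ 2) ^ 2 * (2 * δ / (1 - t ^ 2) + 4 / (1 - t ^ 2) ^ 2) + 3 * (1 - t ^ 2)) * ψ t ^ 2) t := by
      intro t ht
      have hP := hPpos t ht
      have := (((((hasDerivAt_pow 3 t).mul ((hZ t ht).pow 2)).div (hdP t) hP.ne').sub
        ((((hasDerivAt_pow 2 t).const_mul 3).mul (hψ t ht)).mul (hZ t ht))).add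
        (((((hasDerivAt_pow 3 t).mul ((((hasDerivAt_const t δ).div (hdP t) hP.ne').const_add k).add
          ((hone t).div ((hdP t).pow 2) (pow_pos hP 2).ne'))).add ((hasDerivAt_id' t).const_mul 3)).mul (hdP t)).mul ((hψ t ht).pow 2)))
      refine HasDerivAt.congr_deriv this ?_
      simp only [Pi.mul_apply, Pi.pow_apply, Pi.add_apply, Pi.div_apply, Pi.sub_apply]
      push_cast
      field_simp
      ring
    -- V - K μ antitone on (0, r]
    have hmono : ∀ e ∈ Set.Ioo 0 r, V r - K * μ r ≤ V e - K * μ e := by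
      intro e he
      have hanti : AntitoneOn (fun t => V t - K * μ t) (Set.Icc e r) := by
        have hsub : ∀ t ∈ Set.Icc e r, t ∈ Set.Ioo (0:ℝ) 1 := fun t ht =>
          ⟨he.1.trans_le ht.1, ht.2.trans_lt hr.2⟩
        have hd : ∀ t ∈ Set.Icc e r, HasDerivAt (fun t => V t - K * μ t) _ t := fun t ht =>
          (hV t (hsub t ht)).sub ((hμ t (hsub t ht)).const_mul K)
        apply antitoneOn_of_deriv_nonpos (convex_Icc e r)
        · intro x hx; exact (hd x hx).continuousAt.continuousWithinAt
        · intro x hx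
          exact (hd x (interior_subset hx)).differentiableAt.differentiableWithinAt
        · intro x hx
          have hx' := interior_subset hx
          rw [(hd x hx').deriv]
          have := core_ineq k δ (x ^ 2) (r ^ 2) s (1 - x ^ 2) hk hδ (sq_nonneg x)
            (pow_le_pow_left₀ (hsub x hx').1.le hx'.2 2) hr2 (by linarith) hs rfl
          nlinarith [sq_nonneg (ψ x)]
      exact hanti ⟨le_refl e, he.2.le⟩ ⟨he.2.le, le_refl r⟩ he.2.le
    have hJmono : ∀ e ∈ Set.Ioo 0 r, J e ≤ J r := by
      intro e he
      have hm : MonotoneOn J (Set.Icc e r) := by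
        have hsub : ∀ t ∈ Set.Icc e r, t ∈ Set.Ioo (0:ℝ) 1 := fun t ht =>
          ⟨he.1.trans_le ht.1, ht.2.trans_lt hr.2⟩
        apply monotoneOn_of_deriv_nonneg (convex_Icc e r)
        · intro x hx; exact (hJ x (hsub x hx)).continuousAt.continuousWithinAt
        · intro x hx
          exact (hJ x (hsub x (interior_subset hx))).differentiableAt.differentiableWithinAt
        · intro x hx
          have hx' := hsub x (interior_subset hx)
          rw [(hJ x hx').deriv]
          have := hPpos x hx'
          have := hx'.1
          positivity
      exact hm ⟨le_refl e, he.2.le⟩ ⟨he.2.le, le_refl r⟩ he.2.le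
    have hVJ : ∀ e ∈ Set.Ioo 0 r, V e ≤ 10 * e * J r := by
      intro e he
      have he1 : e ∈ Set.Ioo (0:ℝ) 1 := ⟨he.1, he.2.trans hr.2⟩
      have hP := hPpos e he1
      have hP1 : 1 - e ^ 2 ≤ 1 := by nlinarith
      have hle := hJmono e he
      have he2 : e ^ 2 ≤ 1 := by linarith
      have hinv : 1 ≤ 1 / (1 - e ^ 2) := by rw [le_div_iff₀ hP]; linarith
      set Z := U e - e * ψ e with hZd
      set a := Z ^ 2 / (1 - e ^ 2) with had
      set b := (k * (1 - e ^ 2) + δ + 1 / (1 - e ^ 2)) * ψ e ^ 2 with hbd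
      have hJe : J e = a + b := rfl
      have ha : Z ^ 2 ≤ a := by rw [had, le_div_iff₀ hP]; nlinarith [sq_nonneg Z]
      have hb : ψ e ^ 2 ≤ b := by
        rw [hbd]; nlinarith [sq_nonneg (ψ e), mul_nonneg hk hP.le]
      have hVe : V e = e * (e ^ 2 * a) - e * (3 * e * (ψ e * Z)) + e * (e ^ 2 * b)
          + e * (3 * (1 - e ^ 2) * ψ e ^ 2) := by
        simp only [hVdef, had, hbd, ← hZd]; field_simp; ring
      have ha0 : 0 ≤ a := (sq_nonneg Z).trans ha
      have hb0 : 0 ≤ b := (sq_nonneg (ψ e)).trans hb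
      have h1 : e ^ 2 * a ≤ a := mul_le_of_le_one_left ha0 he2
      have h2 : e ^ 2 * b ≤ b := mul_le_of_le_one_left hb0 he2
      have h3 : 3 * (1 - e ^ 2) * ψ e ^ 2 ≤ 3 * b := by
        have := mul_le_of_le_one_left (sq_nonneg (ψ e)) hP1
        linarith
      have h4 : -(3 * e * (ψ e * Z)) ≤ 3 * (a + b) := by
        have : -(ψ e * Z) * e ≤ (a + b) := by
          nlinarith [sq_nonneg (ψ e * e + Z), sq_nonneg (ψ e), sq_nonneg Z]
        nlinarith
      rw [hVe]
      have : e * (e ^ 2 * a + -(3 * e * (ψ e * Z)) + e ^ 2 * b + 3 * (1 - e ^ 2) * ψ e ^ 2)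
          ≤ e * (10 * (J r)) := by
        apply mul_le_mul_of_nonneg_left _ he.1.le
        linarith
      linarith
    have hfin : V r - K * μ r ≤ 10 * 0 * J r - K * 0 := by
      have hlim : Filter.Tendsto (fun e => 10 * e * J r - K * μ e) (nhdsWithin 0 (Set.Ioi 0))
          (nhds (10 * 0 * J r - K * 0)) := by
        refine Filter.Tendsto.sub ?_ (hμ0.const_mul K)
        apply Filter.Tendsto.mono_left _ nhdsWithin_le_nhds
        apply Continuous.tendsto (f := fun e : ℝ => 10 * e * J r)
        fun_prop
      refine ge_of_tendsto hlim ?_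
      filter_upwards [Ioo_mem_nhdsGT hr.1] with e he
      linarith [hmono e he, hVJ e he]
    have hVlow : (r ^ 2 * (k + δ / s + 1 / s ^ 2) + 3 / 4) * (r * s * ψ r ^ 2) ≤ V r := by
      have : V r - (r ^ 2 * (k + δ / s + 1 / s ^ 2) + 3 / 4) * (r * s * ψ r ^ 2)
          = r / s * (r * (U r - r * ψ r) - 3 / 2 * s * ψ r) ^ 2 := by
        simp only [hVdef, ← hs]; field_simp; ring
      have h0 : 0 ≤ r / s * (r * (U r - r * ψ r) - 3 / 2 * s * ψ r) ^ 2 := by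
        have := hr.1
        positivity
      linarith
    have hN : 0 < r ^ 2 * (k + δ / s + 1 / s ^ 2) + 3 / 4 := by positivity
    have : (r ^ 2 * (k + δ / s + 1 / s ^ 2) + 3 / 4) * (r * s * ψ r ^ 2)
        ≤ (r ^ 2 * (k + δ / s + 1 / s ^ 2) + 3 / 4) * (4 * μ r) := by
      rw [hK] at hfin; linarith
    exact le_of_mul_le_mul_left this hN
  linarith
/-- The flux `u` vanishes at the right end. -/
lemma flux_tendsto (φ φ' u b q : ℝ → ℝ) (K L : ℝ)
    (hφ : ∀ t ∈ Set.Ioo (-1:ℝ) 1, HasDerivAt φ (φ' t) t)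
    (hu : ∀ t ∈ Set.Ioo (-1:ℝ) 1, HasDerivAt u (-(q t * φ t)) t)
    (hub : ∀ t ∈ Set.Ioo (-1:ℝ) 1, u t = (1 - t) * b t * φ' t)
    (hb : ∀ t ∈ Set.Ioo (-1:ℝ) 1, |b t| ≤ K)
    (hq : ∀ t ∈ Set.Ioo (-1:ℝ) 1, |q t| ≤ K)
    (hφ1 : Filter.Tendsto φ (nhdsWithin 1 (Set.Iio 1)) (nhds L)) :
    Filter.Tendsto u (nhdsWithin 1 (Set.Iio 1)) (nhds 0) := by
  have hK : 0 ≤ K := (abs_nonneg _).trans (hb 0 (by norm_num))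
  have hbd : ∀ᶠ t in nhdsWithin (1:ℝ) (Set.Iio 1), |φ t| ≤ |L| + 1 := by
    have := hφ1.abs.eventually (gt_mem_nhds (show |L| < |L| + 1 by linarith))
    filter_upwards [this] with t ht using ht.le
  obtain ⟨t0, ht0, hbd'⟩ := (mem_nhdsLT_iff_exists_Ioo_subset).1
    (Filter.inter_mem hbd (Ioo_mem_nhdsLT (show (-1:ℝ) < 1 by norm_num)))
  have hmid : Filter.Tendsto (fun t : ℝ => (1 + t) / 2) (nhdsWithin 1 (Set.Iio 1))
      (nhdsWithin 1 (Set.Iio 1)) := by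
    apply tendsto_nhdsWithin_of_tendsto_nhds_of_eventually_within
    · have : Filter.Tendsto (fun t : ℝ => (1 + t) / 2) (nhds 1) (nhds ((1 + 1) / 2)) := by
        apply Continuous.tendsto (f := fun t : ℝ => (1 + t) / 2); fun_prop
      norm_num at this
      exact this.mono_left nhdsWithin_le_nhds
    · filter_upwards [self_mem_nhdsWithin] with t ht
      simp only [Set.mem_Iio] at *; linarith
  have hbound : Filter.Tendsto (fun t => 2 * K * |φ ((1 + t) / 2) - φ t|
      + K * (|L| + 1) * (1 - t)) (nhdsWithin 1 (Set.Iio 1))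
      (nhds (2 * K * |L - L| + K * (|L| + 1) * (1 - 1))) := by
    refine Filter.Tendsto.add (((hφ1.comp hmid).sub hφ1).abs.const_mul _) ?_
    apply Filter.Tendsto.mono_left _ nhdsWithin_le_nhds
    apply Continuous.tendsto (f := fun t : ℝ => K * (|L| + 1) * (1 - t))
    fun_prop
  simp only [sub_self, abs_zero, mul_zero, add_zero] at hbound
  rw [tendsto_zero_iff_abs_tendsto_zero]
  refine squeeze_zero' (Filter.Eventually.of_forall fun t => abs_nonneg _) ?_ hbound
  filter_upwards [Ioo_mem_nhdsLT ht0] with t ht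
  have hin : ∀ x ∈ Set.Icc t ((1 + t) / 2), x ∈ Set.Ioo t0 1 := fun x hx =>
    ⟨ht.1.trans_le hx.1, by linarith [hx.2, ht.2]⟩
  have htm : t < (1 + t) / 2 := by linarith [ht.2]
  obtain ⟨ξ, hξ, hξe⟩ := exists_hasDerivAt_eq_slope φ φ' htm
    (fun x hx => (hφ x (hbd' (hin x hx)).2).continuousAt.continuousWithinAt)
    (fun x hx => hφ x (hbd' (hin x ⟨hx.1.le, hx.2.le⟩)).2)
  obtain ⟨ζ, hζ, hζe⟩ := exists_hasDerivAt_eq_slope u (fun t => -(q t * φ t)) hξ.1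
    (fun x hx => (hu x (hbd' (hin x ⟨hx.1, hx.2.trans hξ.2.le⟩)).2).continuousAt.continuousWithinAt)
    (fun x hx => hu x (hbd' (hin x ⟨hx.1.le, (hx.2.trans hξ.2).le⟩)).2)
  have hξm := hbd' (hin ξ ⟨hξ.1.le, hξ.2.le⟩)
  have hζm := hbd' (hin ζ ⟨hζ.1.le, (hζ.2.trans hξ.2).le⟩)
  rw [eq_div_iff (by linarith [hζ.1, hζ.2])] at hζe
  rw [eq_div_iff (by linarith)] at hξe
  have h1 : |u ξ| ≤ 2 * K * |φ ((1 + t) / 2) - φ t| := by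
    rw [hub ξ hξm.2, ← hξe, abs_mul, abs_mul, abs_mul]
    have e1 : |1 - ξ| ≤ 2 * |(1 + t) / 2 - t| := by
      rw [abs_of_nonneg (by linarith [hξm.2.2]), abs_of_nonneg (by linarith)]
      linarith [hξ.1]
    have e2 := mul_le_mul e1 (hb ξ hξm.2) (abs_nonneg _) (by positivity)
    have e3 := mul_le_mul_of_nonneg_right e2 (abs_nonneg (φ' ξ))
    linarith
  have h2 : |u ξ - u t| ≤ K * (|L| + 1) * (1 - t) := by
    rw [← hζe, abs_mul, abs_neg, abs_mul]
    have e0 : |φ ζ| ≤ |L| + 1 := hζm.1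
    have e1 : |ξ - t| ≤ 1 - t := by
      rw [abs_of_nonneg (by linarith [hξ.1])]; linarith [hξm.2.2]
    have e2 := mul_le_mul (hq ζ hζm.2) e0 (abs_nonneg _) hK
    exact mul_le_mul e2 e1 (abs_nonneg _) (by positivity)
  have h3 : |u t| ≤ |u ξ| + |u ξ - u t| := by
    have := abs_sub_abs_le_abs_sub (u t) (u ξ)
    rw [abs_sub_comm] at this; linarith
  simp only [Function.comp_apply]
  linarith

/-- The cumulative mass. -/
lemma mass_exists (f : ℝ → ℝ) (T : ℝ) (hT : T ≠ 0)
    (hf : ContinuousOn f (Set.Ioo (-1:ℝ) 1)) (hi : (∫ t in (-1:ℝ)..1, f t) = T) :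
    ∃ M : ℝ → ℝ, (∀ t ∈ Set.Ioo (-1:ℝ) 1, HasDerivAt M (f t) t) ∧
      Filter.Tendsto M (nhdsWithin (-1) (Set.Ioi (-1))) (nhds 0) ∧
      Filter.Tendsto M (nhdsWithin 1 (Set.Iio 1)) (nhds T) := by
  have hint : IntervalIntegrable f volume (-1) 1 := by
    by_contra h
    exact hT (by rw [← hi, intervalIntegral.integral_undef h])
  have hcont : ContinuousOn (fun x => ∫ t in (-1:ℝ)..x, f t) (Set.Icc (-1:ℝ) 1) := by
    have := intervalIntegral.continuousOn_primitive_interval' hint (a := -1) (by simp)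
    rwa [Set.uIcc_of_le (by norm_num)] at this
  refine ⟨fun x => ∫ t in (-1:ℝ)..x, f t, ?_, ?_, ?_⟩
  · intro t ht
    apply intervalIntegral.integral_hasDerivAt_right
    · apply hint.mono_set
      rw [Set.uIcc_of_le ht.1.le, Set.uIcc_of_le (by norm_num)]
      exact Set.Icc_subset_Icc_right ht.2.le
    · exact hf.stronglyMeasurableAtFilter isOpen_Ioo t ht
    · exact hf.continuousAt (isOpen_Ioo.mem_nhds ht)
  · have h := hcont (-1) (by norm_num)
    have h2 : Filter.Tendsto _ _ _ := h.mono_left (nhdsWithin_le_of_mem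
      (Filter.mem_of_superset (Ioo_mem_nhdsGT (show (-1:ℝ) < 1 by norm_num)) Set.Ioo_subset_Icc_self))
    simpa using h2
  · have h := hcont 1 (by norm_num)
    have h2 : Filter.Tendsto _ _ _ := h.mono_left (nhdsWithin_le_of_mem
      (Filter.mem_of_superset (Ioo_mem_nhdsLT (show (-1:ℝ) < 1 by norm_num)) Set.Ioo_subset_Icc_self))
    simp only [hi] at h2; exact h2

set_option maxHeartbeats 2000000 in
/-- The case `β ≥ 2`. -/
lemma case_large (β k α T L w1 : ℝ) (hβ : 2 ≤ β) (hk : 0 ≤ k) (hα : 2 * k < α)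
    (φ u w M : ℝ → ℝ)
    (hw0 : ∀ t ∈ Set.Ioo (-1:ℝ) 1, 0 < w t)
    (hw : ∀ t ∈ Set.Ioo (-1:ℝ) 1, HasDerivAt w ((β - 1) * w t / (1 + t)) t)
    (hφ : ∀ t ∈ Set.Ioo (-1:ℝ) 1, HasDerivAt φ (u t / ((1 - t) * (1 + t) * w t)) t)
    (hu : ∀ t ∈ Set.Ioo (-1:ℝ) 1, HasDerivAt u (-((α - k * (1 + t)) * w t * φ t)) t)
    (hM : ∀ t ∈ Set.Ioo (-1:ℝ) 1, HasDerivAt M (w t * φ t ^ 2) t)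
    (hM0 : ∀ t ∈ Set.Ioo (-1:ℝ) 1, 0 ≤ M t)
    (hM1 : Filter.Tendsto M (nhdsWithin 1 (Set.Iio 1)) (nhds T))
    (hw1 : Filter.Tendsto w (nhdsWithin 1 (Set.Iio 1)) (nhds w1)) (hw1p : 0 < w1)
    (hφ1 : Filter.Tendsto φ (nhdsWithin 1 (Set.Iio 1)) (nhds L))
    (hu1 : Filter.Tendsto u (nhdsWithin 1 (Set.Iio 1)) (nhds 0))
    (η : ℝ) (hη : η ∈ Set.Ioo (-1:ℝ) 1) (hηa : (β - 1) / β ≤ η) :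
    (1 - η) * (1 + η) * w η * φ η ^ 2 ≤ 4 * (β - 1) * T := by
  obtain ⟨h, hh⟩ : ∃ h, h = (β - 1) / 2 := ⟨_, rfl⟩
  have hβ' : β = 2 * h + 1 := by linarith
  have hh0 : 1 / 2 ≤ h := by linarith
  have hη0 : 0 ≤ η := le_trans (div_nonneg (by linarith) (by linarith)) hηa
  have hηa' : h * (1 - η) ≤ (1 + η) / 4 := by
    rw [div_le_iff₀ (by linarith)] at hηa
    rw [hβ'] at hηa
    nlinarith [hη.2]
  set N := α - k * (1 + η) + h - h ^ 2 * (1 - η) / (1 + η) with hN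
  have hN1 : k * (1 - η) + (α - 2 * k) + 3 / 4 * h ≤ N := by
    have : h ^ 2 * (1 - η) / (1 + η) ≤ h / 4 := by
      rw [div_le_iff₀ (by linarith)]; nlinarith
    rw [hN]; linarith
  have hkη : 0 ≤ k * (1 - η) := mul_nonneg hk (by linarith [hη.2])
  have hN0 : 0 < N := by linarith
  set K := 4 * (β - 1) * N with hK
  have hV : ∀ t ∈ Set.Ioo (-1:ℝ) 1, HasDerivAt
      (fun t => (1 - t) * (1 + t) * w t * (α - k * (1 + t) + h) * φ t ^ 2
        + 2 * h * (1 - t) * φ t * u t + u t ^ 2 / w t + K * M t)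
      (-(2 * t * (α - k * (1 + t)) + h * ((β + 1) * t - (β - 1)) + k * (1 - t) * (1 + t))
        * (w t * φ t ^ 2) + K * (w t * φ t ^ 2)) t := by
    intro t ht
    have hw0t := hw0 t ht
    have hp1 : 0 < 1 - t := by linarith [ht.2]
    have hp2 : 0 < 1 + t := by linarith [ht.1]
    have d1 : HasDerivAt (fun t : ℝ => 1 - t) (-1) t := by
      simpa using (hasDerivAt_id' t).const_sub 1
    have d2 : HasDerivAt (fun t : ℝ => 1 + t) 1 t := by
      simpa using (hasDerivAt_id' t).const_add 1
    have := (((((((d1.mul d2).mul (hw t ht)).mul (((d2.const_mul k).const_sub α).add_const h)).mul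
      ((hφ t ht).pow 2)).add (((d1.const_mul (2 * h)).mul (hφ t ht)).mul (hu t ht))).add
      (((hu t ht).pow 2).div (hw t ht) hw0t.ne')).add ((hM t ht).const_mul K))
    refine HasDerivAt.congr_deriv this ?_
    simp only [Pi.mul_apply, Pi.pow_apply]
    push_cast
    rw [hβ']
    field_simp
    ring
  have hlim : Filter.Tendsto
      (fun t => (1 - t) * (1 + t) * w t * (α - k * (1 + t) + h) * φ t ^ 2
        + 2 * h * (1 - t) * φ t * u t + u t ^ 2 / w t + K * M t)
      (nhdsWithin 1 (Set.Iio 1)) (nhds ((1 - 1) * (1 + 1) * w1 * (α - k * (1 + 1) + h) * L ^ 2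
        + 2 * h * (1 - 1) * L * 0 + 0 ^ 2 / w1 + K * T)) := by
    have c0 : Filter.Tendsto (fun t : ℝ => t) (nhdsWithin 1 (Set.Iio 1)) (nhds 1) :=
      Filter.Tendsto.mono_left Filter.tendsto_id nhdsWithin_le_nhds
    have c1 := c0.const_sub 1
    have c2 := c0.const_add 1
    exact ((((((c1.mul c2).mul hw1).mul (((c2.const_mul k).const_sub α).add_const h)).mul
      (hφ1.pow 2)).add (((c1.const_mul (2 * h)).mul hφ1).mul hu1)).add
      ((hu1.pow 2).div hw1 hw1p.ne')).add (hM1.const_mul K)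
  have hW : ∀ t ∈ Set.Ioo η 1, 0 ≤ -(2 * t * (α - k * (1 + t)) + h * ((β + 1) * t - (β - 1))
      + k * (1 - t) * (1 + t)) * (w t * φ t ^ 2) + K * (w t * φ t ^ 2) := by
    intro t ht
    have ht' : t ∈ Set.Ioo (-1:ℝ) 1 := ⟨hη.1.trans ht.1, ht.2⟩
    have hwp := hw0 t ht'
    have hK4 : 4 * N ≤ K := by rw [hK]; nlinarith
    have hkt : k * (1 - t) ≤ k * (1 - η) := mul_le_mul_of_nonneg_left (by linarith [ht.1]) hk
    have hkt0 : 0 ≤ k * (1 - t) := mul_nonneg hk (by linarith [ht.2])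
    have e1 : 2 * t * (α - k * (1 + t)) + k * (1 - t) * (1 + t)
        = 2 * t * (α - 2 * k) + k * (1 - t) * (1 + 3 * t) := by ring
    have e2 : 2 * t * (α - 2 * k) ≤ 2 * (α - 2 * k) := by nlinarith [ht.2]
    have e3 : k * (1 - t) * (1 + 3 * t) ≤ k * (1 - t) * 4 :=
      mul_le_mul_of_nonneg_left (by linarith [ht.2]) hkt0
    have e4 : h * ((β + 1) * t - (β - 1)) ≤ h * 2 := by
      apply mul_le_mul_of_nonneg_left _ (by linarith)
      nlinarith [ht.2]
    have : 2 * t * (α - k * (1 + t)) + h * ((β + 1) * t - (β - 1))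
      + k * (1 - t) * (1 + t) ≤ K := by linarith
    have hwφ : 0 ≤ w t * φ t ^ 2 := by positivity
    nlinarith
  have hbelow : ∀ t ∈ Set.Ioo η 1, (1 - t) * (1 + t) * w t * (α - k * (1 + t) + h) * φ t ^ 2
        + 2 * h * (1 - t) * φ t * u t + u t ^ 2 / w t + K * M t ≤ K * T := by
    intro t ht
    have := limit_le_of_deriv_nonpos (a := η) (b := 1)
      (fun t ht => (hV t ⟨hη.1.trans ht.1, ht.2⟩).neg)
      (fun t ht => by have := hW t ht; linarith) hlim.neg ht
    simp only [Pi.neg_apply] at this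
    norm_num at this ⊢
    linarith
  have hcr := (hV η hη).continuousAt.continuousWithinAt (s := Set.Ioi η)
  have hfin : _ ≤ K * T := le_of_tendsto hcr (by
    filter_upwards [Ioo_mem_nhdsGT hη.2] with t ht using hbelow t ht)
  have hwη := hw0 η hη
  have hp2 : 0 < 1 + η := by linarith
  have hlow : (1 - η) * (1 + η) * w η * φ η ^ 2 * N ≤
      (1 - η) * (1 + η) * w η * (α - k * (1 + η) + h) * φ η ^ 2
        + 2 * h * (1 - η) * φ η * u η + u η ^ 2 / w η := by
    have e : (1 - η) * (1 + η) * w η * (α - k * (1 + η) + h) * φ η ^ 2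
        + 2 * h * (1 - η) * φ η * u η + u η ^ 2 / w η
        - (1 - η) * (1 + η) * w η * φ η ^ 2 * N
        = (h * (1 - η) * w η * φ η + u η) ^ 2 / w η := by
      rw [hN]; field_simp; ring
    have : 0 ≤ (h * (1 - η) * w η * φ η + u η) ^ 2 / w η := by positivity
    linarith
  have hKM : 0 ≤ K * M η := mul_nonneg (by rw [hK]; nlinarith) (hM0 η hη)
  have : (1 - η) * (1 + η) * w η * φ η ^ 2 * N ≤ 4 * (β - 1) * T * N := by
    rw [hK] at hfin hKM; linarith
  exact le_of_mul_le_mul_right this hN0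

set_option maxHeartbeats 1000000 in
/-- The case `β = 3/2`. -/
lemma case_small (k α T L : ℝ) (hk : 0 ≤ k) (hα : 2 * k < α)
    (φ u w M : ℝ → ℝ)
    (hw : ∀ r ∈ Set.Ioo (0:ℝ) 1, w (2 * r ^ 2 - 1) = √2 * r)
    (hφ : ∀ t ∈ Set.Ioo (-1:ℝ) 1, HasDerivAt φ (u t / ((1 - t) * (1 + t) * w t)) t)
    (hu : ∀ t ∈ Set.Ioo (-1:ℝ) 1, HasDerivAt u (-((α - k * (1 + t)) * w t * φ t)) t)
    (hM : ∀ t ∈ Set.Ioo (-1:ℝ) 1, HasDerivAt M (w t * φ t ^ 2) t)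
    (hM0 : Filter.Tendsto M (nhdsWithin (-1) (Set.Ioi (-1))) (nhds 0))
    (hM1 : Filter.Tendsto M (nhdsWithin 1 (Set.Iio 1)) (nhds T))
    (hφ1 : Filter.Tendsto φ (nhdsWithin 1 (Set.Iio 1)) (nhds L))
    (hu1 : Filter.Tendsto u (nhdsWithin 1 (Set.Iio 1)) (nhds 0))
    (η : ℝ) (hη : η ∈ Set.Ioo (-1:ℝ) 1) (hηa : 1 / 3 ≤ η) :
    (1 - η) * (1 + η) * w η * φ η ^ 2 ≤ 2 * T := by
  have h2 : (0:ℝ) < √2 := by positivity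
  have h22 : √2 ^ 2 = (2:ℝ) := Real.sq_sqrt (by norm_num)
  have hmap : ∀ r ∈ Set.Ioo (0:ℝ) 1, 2 * r ^ 2 - 1 ∈ Set.Ioo (-1:ℝ) 1 := by
    intro r hr
    constructor <;> nlinarith [hr.1, hr.2]
  have hd : ∀ r : ℝ, HasDerivAt (fun r : ℝ => 2 * r ^ 2 - 1) (4 * r) r := by
    intro r
    have := ((hasDerivAt_pow 2 r).const_mul 2).sub_const 1
    refine this.congr_deriv ?_
    push_cast; ring
  have t1 : Filter.Tendsto (fun r : ℝ => 2 * r ^ 2 - 1) (nhdsWithin 1 (Set.Iio 1))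
      (nhdsWithin 1 (Set.Iio 1)) := by
    apply tendsto_nhdsWithin_of_tendsto_nhds_of_eventually_within
    · have := (hd 1).continuousAt.tendsto
      norm_num at this
      exact this.mono_left nhdsWithin_le_nhds
    · filter_upwards [Ioo_mem_nhdsLT (show (0:ℝ) < 1 by norm_num)] with r hr using (hmap r hr).2
  have t0 : Filter.Tendsto (fun r : ℝ => 2 * r ^ 2 - 1) (nhdsWithin 0 (Set.Ioi 0))
      (nhdsWithin (-1) (Set.Ioi (-1))) := by
    apply tendsto_nhdsWithin_of_tendsto_nhds_of_eventually_within
    · have := (hd 0).continuousAt.tendsto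
      norm_num at this
      exact this.mono_left nhdsWithin_le_nhds
    · filter_upwards [Ioo_mem_nhdsGT (show (0:ℝ) < 1 by norm_num)] with r hr using (hmap r hr).1
  have c0 : Filter.Tendsto (fun t : ℝ => t) (nhdsWithin 1 (Set.Iio 1)) (nhds 1) :=
    Filter.Tendsto.mono_left Filter.tendsto_id nhdsWithin_le_nhds
  have hPpos : ∀ t ∈ Set.Ioo (0:ℝ) 1, 0 < 1 - t ^ 2 := fun t ht => by nlinarith [ht.1, ht.2]
  set r := √((1 + η) / 2) with hr
  have hr2 : r ^ 2 = (1 + η) / 2 := Real.sq_sqrt (by linarith)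
  have hr0 : 0 < r := Real.sqrt_pos.2 (by linarith)
  have hr1 : r < 1 := by nlinarith [hη.2]
  have hrm : r ∈ Set.Ioo (0:ℝ) 1 := ⟨hr0, hr1⟩
  have hrη : 2 * r ^ 2 - 1 = η := by rw [hr2]; ring
  have key := core (8 * k) (4 * α - 8 * k + 2) (T / (4 * √2)) (1 * L) (by linarith) (by linarith)
    (fun r => r * φ (2 * r ^ 2 - 1))
    (fun r => (1 - r ^ 2) * φ (2 * r ^ 2 - 1) + u (2 * r ^ 2 - 1) / (√2 * r))
    (fun r => M (2 * r ^ 2 - 1) / (4 * √2))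
    (by
      intro t ht
      have hP := hPpos t ht
      have ht0 := ht.1
      have d := (hφ _ (hmap t ht)).comp t (hd t)
      refine ((hasDerivAt_id' t).mul d).congr_deriv ?_
      simp only [Function.comp_apply]
      rw [hw t ht]
      have e1 : 1 - (2 * t ^ 2 - 1) = 2 * (1 - t ^ 2) := by ring
      have e2 : 1 + (2 * t ^ 2 - 1) = 2 * t ^ 2 := by ring
      rw [e1, e2]
      field_simp
      ring)
    (by
      intro t ht
      have hP := hPpos t ht
      have ht0 := ht.1
      have d := (hφ _ (hmap t ht)).comp t (hd t)
      have d' := (hu _ (hmap t ht)).comp t (hd t)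
      have dP : HasDerivAt (fun t : ℝ => 1 - t ^ 2) (-(2 * t)) t := by
        simpa using (hasDerivAt_pow 2 t).const_sub 1
      refine ((dP.mul d).add (d'.div ((hasDerivAt_id' t).const_mul √2)
        (by positivity))).congr_deriv ?_
      simp only [Function.comp_apply]
      rw [hw t ht]
      have e1 : 1 - (2 * t ^ 2 - 1) = 2 * (1 - t ^ 2) := by ring
      have e2 : 1 + (2 * t ^ 2 - 1) = 2 * t ^ 2 := by ring
      rw [e1, e2]
      field_simp
      ring)
    (by
      intro t ht
      have d := (hM _ (hmap t ht)).comp t (hd t)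
      refine (d.div_const (4 * √2)).congr_deriv ?_
      rw [hw t ht]
      field_simp)
    (by simpa using (hM0.comp t0).div_const (4 * √2))
    ((hM1.comp t1).div_const (4 * √2))
    (c0.mul (hφ1.comp t1))
    (by
      have := (((c0.pow 2).const_sub 1).mul (hφ1.comp t1)).add
        ((hu1.comp t1).div (c0.const_mul √2) (by positivity))
      norm_num at this
      exact this)
    r hrm (by rw [hr2]; linarith)
  have hwr := hw r hrm
  simp only [hrη] at key
  rw [hrη] at hwr
  rw [hwr]
  have e1 : 1 - η = 2 * (1 - r ^ 2) := by rw [hr2]; ring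
  have e2 : 1 + η = 2 * r ^ 2 := by rw [hr2]; ring
  rw [e1, e2]
  have := mul_le_mul_of_nonneg_left key (show 0 ≤ 4 * √2 by positivity)
  have e3 : 4 * √2 * (2 * (T / (4 * √2))) = 2 * T := by field_simp
  rw [e3] at this
  linarith

theorem stmt_7 (m d : ℕ) (hd : 1 ≤ d) (hmd : 3 ≤ 2 * m + d)
    (c α : ℝ) (hc : 0 < c) (hα : c ^ 2 / 4 < α)
    (β a : ℝ) (hβ : β = (m : ℝ) + (d : ℝ) / 2)
    (ha : a = (2 * (m : ℝ) + (d : ℝ) - 2) / (2 * (m : ℝ) + (d : ℝ)))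
    (φ : ℝ → ℝ)
    (hreg : ContDiffOn ℝ 2 φ (Set.Ioo (-1 : ℝ) 1))
    (hode : ∀ η ∈ Set.Ioo (-1 : ℝ) 1,
      deriv (fun t : ℝ => (1 - t) * (1 + t) ^ β * deriv φ t) η +
        (α - c ^ 2 * (1 + η) / 8) * (1 + η) ^ (β - 1) * φ η = 0)
    (hcont : ContinuousWithinAt φ (Set.Ioo (-1 : ℝ) 1) 1)
    (hnorm : (∫ t in (-1 : ℝ)..1, (1 + t) ^ (β - 1) * φ t ^ 2) = 2 ^ (β - 1)) :
    ∀ η ∈ Set.Icc a 1,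
      Real.sqrt ((1 - η) * (1 + η) ^ β) * |φ η| ≤ Real.sqrt (2 ^ (β + 1) * (β - 1)) := by
  intro η hηI
  have hcase : β = 3 / 2 ∨ 2 ≤ β := by
    rcases Nat.eq_or_lt_of_le hmd with h | h
    · left
      have : (3:ℝ) = 2 * m + d := by exact_mod_cast h
      rw [hβ]; linarith
    · right
      have : (4:ℝ) ≤ 2 * m + d := by exact_mod_cast h
      rw [hβ]; linarith
  have hβ32 : 3 / 2 ≤ β := by rcases hcase with h | h <;> linarith
  have haβ : a = (β - 1) / β := by
    have e : 2 * (m:ℝ) + d = 2 * β := by rw [hβ]; ring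
    rw [ha, e]
    have : β ≠ 0 := by linarith
    field_simp
  have ha0 : 0 ≤ a := by rw [haβ]; exact div_nonneg (by linarith) (by linarith)
  rcases eq_or_lt_of_le hηI.2 with h1 | h1
  · rw [h1]; simp
  have hη : η ∈ Set.Ioo (-1:ℝ) 1 := ⟨by linarith [hηI.1], h1⟩
  have hpos : ∀ t ∈ Set.Ioo (-1:ℝ) 1, 0 < 1 + t := fun t ht => by linarith [ht.1]
  -- regularity
  have hφd : ∀ t ∈ Set.Ioo (-1:ℝ) 1, HasDerivAt φ (deriv φ t) t := fun t ht =>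
    ((hreg.differentiableOn (by norm_num)).differentiableAt (isOpen_Ioo.mem_nhds ht)).hasDerivAt
  have hφdd : ∀ t ∈ Set.Ioo (-1:ℝ) 1, DifferentiableAt ℝ (deriv φ) t := fun t ht => by
    have h1 : ContDiffOn ℝ 1 (deriv φ) (Set.Ioo (-1:ℝ) 1) :=
      hreg.deriv_of_isOpen isOpen_Ioo (by norm_num)
    exact (h1.differentiableOn (by norm_num)).differentiableAt (isOpen_Ioo.mem_nhds ht)
  set w : ℝ → ℝ := fun t => (1 + t) ^ (β - 1) with hwdef
  set u : ℝ → ℝ := fun t => (1 - t) * (1 + t) ^ β * deriv φ t with hudef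
  have hwβ : ∀ t ∈ Set.Ioo (-1:ℝ) 1, (1 + t) ^ β = (1 + t) * w t := by
    intro t ht
    have := hpos t ht
    simp only [hwdef]
    rw [Real.rpow_sub_one this.ne']; field_simp
  have hw0 : ∀ t ∈ Set.Ioo (-1:ℝ) 1, 0 < w t := fun t ht => Real.rpow_pos_of_pos (hpos t ht) _
  have hadd : ∀ t : ℝ, HasDerivAt (fun t : ℝ => 1 + t) 1 t := fun t => by
    simpa using (hasDerivAt_id' t).const_add 1
  have hwd : ∀ t ∈ Set.Ioo (-1:ℝ) 1, HasDerivAt w ((β - 1) * w t / (1 + t)) t := by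
    intro t ht
    have hp := hpos t ht
    refine ((hadd t).rpow_const (p := β - 1) (Or.inl hp.ne')).congr_deriv ?_
    simp only [hwdef]
    rw [Real.rpow_sub_one hp.ne']; ring
  have hu : ∀ t ∈ Set.Ioo (-1:ℝ) 1,
      HasDerivAt u (-((α - c ^ 2 / 8 * (1 + t)) * w t * φ t)) t := by
    intro t ht
    have hp := hpos t ht
    have hdiff : DifferentiableAt ℝ u t := by
      have d1 := ((hadd t).rpow_const (p := β) (Or.inl hp.ne')).differentiableAt
      have d0 : DifferentiableAt ℝ (fun t : ℝ => 1 - t) t := by fun_prop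
      exact (d0.mul d1).mul (hφdd t ht)
    refine hdiff.hasDerivAt.congr_deriv ?_
    have := hode t ht
    simp only [hwdef]
    linear_combination this
  have hφu : ∀ t ∈ Set.Ioo (-1:ℝ) 1, HasDerivAt φ (u t / ((1 - t) * (1 + t) * w t)) t := by
    intro t ht
    refine (hφd t ht).congr_deriv ?_
    simp only [hudef]
    rw [hwβ t ht]
    have h1 := hpos t ht
    have h2 := hw0 t ht
    have h3 : 0 < 1 - t := by linarith [ht.2]
    field_simp
  have hφ1 : Filter.Tendsto φ (nhdsWithin 1 (Set.Iio 1)) (nhds (φ 1)) :=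
    Filter.Tendsto.mono_left hcont (nhdsWithin_le_of_mem
      (Ioo_mem_nhdsLT (show (-1:ℝ) < 1 by norm_num)))
  have hw2 : ∀ t ∈ Set.Ioo (-1:ℝ) 1, w t ≤ 2 ^ (β - 1) := fun t ht =>
    Real.rpow_le_rpow (hpos t ht).le (by linarith [ht.2]) (by linarith)
  have h2p : (0:ℝ) < 2 ^ (β - 1) := by positivity
  have hc2 : 0 < c ^ 2 := by positivity
  have hu1 : Filter.Tendsto u (nhdsWithin 1 (Set.Iio 1)) (nhds 0) := by
    refine flux_tendsto φ (deriv φ) u (fun t => (1 + t) ^ β)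
      (fun t => (α - c ^ 2 / 8 * (1 + t)) * w t) ((2 + α) * 2 ^ (β - 1)) (φ 1) hφd hu
      (fun t ht => rfl) ?_ ?_ hφ1
    · intro t ht
      have h1 := hpos t ht
      have h2 := hw0 t ht
      rw [hwβ t ht, abs_of_pos (by positivity)]
      apply mul_le_mul _ (hw2 t ht) h2.le _ <;> linarith [ht.2]
    · intro t ht
      have h1 := hpos t ht
      have h2 := hw0 t ht
      have h3 : 0 < α - c ^ 2 / 8 * (1 + t) := by nlinarith [ht.2]
      rw [abs_of_pos (by positivity)]
      apply mul_le_mul _ (hw2 t ht) h2.le _ <;> nlinarith [ht.2]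
  have hw1 : Filter.Tendsto w (nhdsWithin 1 (Set.Iio 1)) (nhds (2 ^ (β - 1))) := by
    have := ((hadd 1).rpow_const (p := β - 1) (Or.inl (by norm_num))).continuousAt.tendsto
    norm_num at this
    exact this.mono_left nhdsWithin_le_nhds
  obtain ⟨M, hM, hM0, hM1⟩ := mass_exists (fun t => w t * φ t ^ 2) (2 ^ (β - 1)) h2p.ne'
    (fun t ht => (((hwd t ht).continuousAt).mul
      ((hφd t ht).continuousAt.pow 2)).continuousWithinAt) hnorm
  have hMnn : ∀ t ∈ Set.Ioo (-1:ℝ) 1, 0 ≤ M t := by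
    intro t ht
    refine le_of_tendsto hM0 ?_
    filter_upwards [Ioo_mem_nhdsGT ht.1] with s hs
    have := le_limit_of_deriv_nonpos (fun t ht => (hM t ht).neg)
      (fun t ht => by
        have := hw0 t ht
        have : 0 ≤ w t * φ t ^ 2 := by positivity
        linarith) (s := s) (t := t) ⟨hs.1, hs.2.trans ht.2⟩ ht hs.2.le
    simp only [Pi.neg_apply] at this
    linarith
  have key : (1 - η) * (1 + η) * w η * φ η ^ 2 ≤ 4 * (β - 1) * 2 ^ (β - 1) := by
    rcases hcase with h | h
    · have := case_small (c ^ 2 / 8) α (2 ^ (β - 1)) (φ 1) (by linarith) (by linarith) φ u w M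
        (by
          intro r hr
          have e : 1 + (2 * r ^ 2 - 1) = 2 * r ^ 2 := by ring
          simp only [hwdef]
          rw [e, h, show (3 / 2 - 1 : ℝ) = 1 / 2 by norm_num, ← Real.sqrt_eq_rpow,
            Real.sqrt_mul (by norm_num), Real.sqrt_sq hr.1.le])
        hφu hu hM hM0 hM1 hφ1 hu1 η hη (by
          have := hηI.1
          rw [haβ, h] at this
          norm_num at this; linarith)
      have e : 4 * (β - 1) = 2 := by rw [h]; norm_num
      rw [e]; exact this
    · exact case_large β (c ^ 2 / 8) α (2 ^ (β - 1)) (φ 1) (2 ^ (β - 1)) h (by linarith)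
        (by linarith) φ u w M hw0 hwd hφu hu hM hMnn hM1 hw1 h2p hφ1 hu1 η hη
        (by rw [← haβ]; exact hηI.1)
  rw [← Real.sqrt_sq_eq_abs, ← Real.sqrt_mul (by
    have := hpos η hη
    have h3 : 0 < 1 - η := by linarith
    positivity)]
  apply Real.sqrt_le_sqrt
  rw [hwβ η hη]
  have e : (2:ℝ) ^ (β + 1) = 4 * 2 ^ (β - 1) := by
    rw [show β + 1 = (β - 1) + 2 by ring, Real.rpow_add (by norm_num)]
    norm_num; ring
  rw [e]
  linarith

end
end

section
/- For every integer d ≥ 1, ∫_{ℝ^d} J_{d/2}(‖τ‖)² / ‖τ‖^d dτ = π^{d/2} / Γ(d/2 + 1). -/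
open MeasureTheory Real

noncomputable section

/-- The Bessel function of the first kind `J_ν`, defined by its power series. -/
def besselJ (v x : ℝ) : ℝ :=
  ∑' k : ℕ, ((-1 : ℝ) ^ k / (Nat.factorial k * Real.Gamma ((k : ℝ) + v + 1))) *
    (x / 2) ^ (2 * (k : ℝ) + v)

open Filter Topology Set

/-- Coefficients of the entire part of the Bessel function. -/
def bc (v : ℝ) (k : ℕ) : ℝ := (-1 : ℝ) ^ k / (Nat.factorial k * Real.Gamma ((k : ℝ) + v + 1))

/-- The entire part of the Bessel function. -/
def bL (v y : ℝ) : ℝ := ∑' k : ℕ, bc v k * y ^ k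

lemma bgamma_pos {v : ℝ} (hv : 0 ≤ v) (k : ℕ) : 0 < Real.Gamma ((k : ℝ) + v + 1) :=
  Real.Gamma_pos_of_pos (by positivity)

lemma bgamma_mono {v : ℝ} (hv : 0 ≤ v) (k : ℕ) :
    Real.Gamma (v + 1) ≤ Real.Gamma ((k : ℝ) + v + 1) := by
  induction k with
  | zero => simp
  | succ k ih =>
    have h : ((k + 1 : ℕ) : ℝ) + v + 1 = ((k : ℝ) + v + 1) + 1 := by push_cast; ring
    have h0 : (0 : ℝ) < (k : ℝ) + v + 1 := by positivity
    rw [h, Real.Gamma_add_one h0.ne']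
    have := bgamma_pos hv k
    have h1 : (1 : ℝ) ≤ (k : ℝ) + v + 1 := by
      have : (0 : ℝ) ≤ k := by positivity
      linarith
    nlinarith

lemma bsummable {v : ℝ} (hv : 0 ≤ v) (y : ℝ) : Summable (fun k => bc v k * y ^ k) := by
  have h0 : 0 < Real.Gamma (v + 1) := Real.Gamma_pos_of_pos (by linarith)
  refine Summable.of_norm_bounded
    ((Real.summable_pow_div_factorial |y|).mul_left (1 / Real.Gamma (v + 1))) ?_
  intro k
  have hg := bgamma_mono hv k
  have hg' := bgamma_pos hv k
  have hf : (0 : ℝ) < Nat.factorial k := by positivity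
  simp only [bc, norm_mul, norm_div, norm_pow, norm_neg, norm_one, one_pow, Real.norm_eq_abs,
    abs_of_pos hf, abs_of_pos hg']
  have : 1 / ((Nat.factorial k : ℝ) * Real.Gamma ((k : ℝ) + v + 1)) ≤
      1 / ((Nat.factorial k : ℝ) * Real.Gamma (v + 1)) := by
    apply one_div_le_one_div_of_le (by positivity)
    gcongr
  calc _ ≤ 1 / ((Nat.factorial k : ℝ) * Real.Gamma (v + 1)) * |y| ^ k := by gcongr
    _ = _ := by field_simp

lemma bc_succ {v : ℝ} (k : ℕ) : ((k : ℝ) + 1) * bc v (k + 1) = - bc (v + 1) k := by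
  unfold bc
  have h : ((k + 1 : ℕ) : ℝ) + v + 1 = (k : ℝ) + (v + 1) + 1 := by push_cast; ring
  rw [h, Nat.factorial_succ, pow_succ]
  push_cast
  have : (k : ℝ) + 1 ≠ 0 := by positivity
  by_cases hG : Real.Gamma ((k : ℝ) + (v + 1) + 1) = 0
  · simp [hG]
  field_simp

lemma bc_add {v : ℝ} (hv : 0 ≤ v) (k : ℕ) : ((k : ℝ) + v + 1) * bc (v + 1) k = bc v k := by
  unfold bc
  have h0 : (0 : ℝ) < (k : ℝ) + v + 1 := by positivity
  have h : (k : ℝ) + (v + 1) + 1 = ((k : ℝ) + v + 1) + 1 := by ring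
  rw [h, Real.Gamma_add_one h0.ne']
  have := bgamma_pos hv k
  field_simp

lemma bderiv_summable {v : ℝ} (hv : 0 ≤ v) (y : ℝ) :
    Summable (fun k : ℕ => bc v k * (k * y ^ (k - 1))) := by
  rw [← summable_nat_add_iff 1]
  refine (bsummable (v := v + 1) (by linarith) y).neg.congr ?_
  intro k
  have := bc_succ (v := v) k
  simp only [Nat.add_sub_cancel]
  push_cast
  linear_combination (-y ^ k) * this

lemma bderiv_tsum {v : ℝ} (hv : 0 ≤ v) (y : ℝ) :
    ∑' k : ℕ, bc v k * (k * y ^ (k - 1)) = - bL (v + 1) y := by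
  rw [(bderiv_summable hv y).tsum_eq_zero_add]
  simp only [Nat.cast_zero, zero_mul, mul_zero, zero_add, bL, ← tsum_neg]
  congr 1
  ext k
  have := bc_succ (v := v) k
  simp only [Nat.add_sub_cancel]
  push_cast
  linear_combination (y ^ k) * this

lemma bL_hasDerivAt {v : ℝ} (hv : 0 ≤ v) (y : ℝ) :
    HasDerivAt (bL v) (- bL (v + 1) y) y := by
  rw [← bderiv_tsum hv y]
  unfold bL
  have hu : Summable (fun k : ℕ => |bc v k| * (k * (|y| + 1) ^ (k - 1))) := by
    refine (bderiv_summable hv (|y| + 1)).abs.congr ?_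
    intro k
    have : 0 ≤ |y| + 1 := by positivity
    simp [abs_mul, abs_of_nonneg this]
  refine hasDerivAt_tsum_of_isPreconnected (t := Metric.ball (0 : ℝ) (|y| + 1)) (y₀ := y) hu
    Metric.isOpen_ball (convex_ball _ _).isPreconnected
    (g := fun k z => bc v k * z ^ k) (g' := fun k z => bc v k * (k * z ^ (k - 1))) ?_ ?_ ?_ ?_ ?_
  · intro n z _
    exact (hasDerivAt_pow n z).const_mul _
  · intro n z hz
    have hz : |z| ≤ |y| + 1 := by
      have := Metric.mem_ball.1 hz
      rw [dist_zero_right, Real.norm_eq_abs] at this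
      exact this.le
    simp only [Real.norm_eq_abs, abs_mul, abs_pow, Nat.abs_cast]
    gcongr
  · simp
  · exact bsummable hv y
  · simp

lemma bL_rec {v : ℝ} (hv : 0 ≤ v) (y : ℝ) :
    bL v y = (v + 1) * bL (v + 1) y - y * bL (v + 2) y := by
  have h1 := bderiv_tsum (v := v + 1) (by linarith) y
  have e : v + 1 + 1 = v + 2 := by ring
  rw [e] at h1
  have h2 : bL v y = (v + 1) * bL (v + 1) y +
      y * ∑' k : ℕ, bc (v + 1) k * (k * y ^ (k - 1)) := by
    unfold bL
    rw [← tsum_mul_left, ← tsum_mul_left, ← Summable.tsum_add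
      ((bsummable (by linarith) y).mul_left _) ((bderiv_summable (by linarith) y).mul_left _)]
    congr 1
    ext k
    rw [← bc_add hv k]
    rcases k with _ | k
    · simp
    · simp only [Nat.add_sub_cancel]; push_cast; ring
  rw [h2, h1]; ring

lemma besselJ_eq {v x : ℝ} (hx : 0 < x) :
    besselJ v x = (x / 2) ^ v * bL v (x ^ 2 / 4) := by
  unfold besselJ bL
  rw [← tsum_mul_left]
  congr 1
  ext k
  have : (x / 2) ^ (2 * (k : ℝ) + v) = (x / 2) ^ v * (x ^ 2 / 4) ^ k := by
    rw [Real.rpow_add (by positivity), Real.rpow_mul (by positivity), Real.rpow_natCast]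
    have : (x / 2) ^ (2 : ℝ) = x ^ 2 / 4 := by
      rw [Real.rpow_two]; ring
    rw [this]; ring
  rw [this]; unfold bc; ring

lemma besselJ_hasDerivAt_aux {v x : ℝ} (hv : 0 ≤ v) (hx : 0 < x) :
    HasDerivAt (besselJ v) (v / x * besselJ v x - besselJ (v + 1) x) x := by
  have h1 : HasDerivAt (fun x : ℝ => (x / 2) ^ v * bL v (x ^ 2 / 4))
      ((1 / 2 * v * (x / 2) ^ (v - 1)) * bL v (x ^ 2 / 4) +
        (x / 2) ^ v * (- bL (v + 1) (x ^ 2 / 4) * (2 * x / 4))) x := by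
    refine HasDerivAt.mul ?_ ?_
    · exact ((hasDerivAt_id x).div_const 2).rpow_const (Or.inl (by simp; positivity))
    · refine HasDerivAt.comp x (bL_hasDerivAt hv _) ?_
      simpa using (hasDerivAt_pow 2 x).div_const 4
  have h2 : besselJ v =ᶠ[𝓝 x] (fun x : ℝ => (x / 2) ^ v * bL v (x ^ 2 / 4)) := by
    filter_upwards [lt_mem_nhds hx] with z hz using besselJ_eq hz
  convert! h1.congr_of_eventuallyEq h2 using 1
  rw [besselJ_eq hx, besselJ_eq hx, Real.rpow_add (by positivity), Real.rpow_sub (by positivity),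
    Real.rpow_one]
  field_simp
  ring

lemma besselJ_rec {v x : ℝ} (hv : 0 ≤ v) (hx : 0 < x) :
    besselJ (v + 2) x = 2 * (v + 1) / x * besselJ (v + 1) x - besselJ v x := by
  rw [besselJ_eq hx, besselJ_eq hx, besselJ_eq hx, bL_rec hv, Real.rpow_add (by positivity),
    Real.rpow_add (by positivity), Real.rpow_one, Real.rpow_two]
  field_simp
  ring

lemma besselJ_hasDerivAt_succ {v x : ℝ} (hv : 0 ≤ v) (hx : 0 < x) :
    HasDerivAt (besselJ (v + 1)) (besselJ v x - (v + 1) / x * besselJ (v + 1) x) x := by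
  have := besselJ_hasDerivAt_aux (v := v + 1) (by linarith) hx
  have e : v + 1 + 1 = v + 2 := by ring
  rw [e, besselJ_rec hv hx] at this
  convert! this using 1
  ring

lemma bL_tendsto {v : ℝ} (hv : 0 ≤ v) :
    Tendsto (fun x : ℝ => bL v (x ^ 2 / 4)) (𝓝[>] 0) (𝓝 (1 / Real.Gamma (v + 1))) := by
  have h0 : bL v 0 = 1 / Real.Gamma (v + 1) := by
    unfold bL
    rw [tsum_eq_single 0]
    · simp [bc]
    · intro k hk; simp [hk]
  have hc : ContinuousAt (fun x : ℝ => bL v (x ^ 2 / 4)) 0 := by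
    refine ContinuousAt.comp (f := fun x : ℝ => x ^ 2 / 4) (bL_hasDerivAt hv _).continuousAt ?_
    fun_prop
  have := hc.tendsto.mono_left (nhdsWithin_le_nhds (s := Ioi 0))
  simpa [h0] using this

lemma besselJ_tendsto_zero {v : ℝ} (hv : 0 < v) :
    Tendsto (besselJ v) (𝓝[>] 0) (𝓝 0) := by
  have h1 : Tendsto (fun x : ℝ => (x / 2) ^ v) (𝓝[>] 0) (𝓝 0) := by
    have : ContinuousAt (fun x : ℝ => (x / 2) ^ v) 0 := by
      refine ContinuousAt.rpow_const (by fun_prop) (Or.inr hv.le)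
    have := this.tendsto.mono_left (nhdsWithin_le_nhds (s := Ioi 0))
    simpa [Real.zero_rpow hv.ne'] using this
  have := h1.mul (bL_tendsto hv.le)
  rw [zero_mul] at this
  refine this.congr' ?_
  filter_upwards [self_mem_nhdsWithin] with x hx using (besselJ_eq hx).symm

lemma besselJ_zero_tendsto : Tendsto (besselJ 0) (𝓝[>] 0) (𝓝 1) := by
  have := bL_tendsto (le_refl (0 : ℝ))
  simp only [zero_add, Real.Gamma_one, div_one] at this
  refine this.congr' ?_
  filter_upwards [self_mem_nhdsWithin] with x hx
  rw [besselJ_eq hx]; simp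

/-- The inductive package: decay at infinity and an antiderivative of `2 ν J_ν² / x`. -/
def BGood (v : ℝ) : Prop :=
  0 ≤ v ∧ Tendsto (besselJ v) atTop (𝓝 0) ∧ Tendsto (besselJ (v + 1)) atTop (𝓝 0) ∧
  ∃ H : ℝ → ℝ, (∀ x, 0 < x → HasDerivAt H (2 * v * besselJ v x ^ 2 / x) x) ∧
    Tendsto (fun x => H x - besselJ v x ^ 2) (𝓝[>] 0) (𝓝 0) ∧ Tendsto H atTop (𝓝 1)

lemma BGood.succ {v : ℝ} (h : BGood v) : BGood (v + 1) := by
  obtain ⟨hv, h0, h1, H, hH, hH0, hH1⟩ := h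
  have e : v + 1 + 1 = v + 2 := by ring
  refine ⟨by linarith, h1, ?_, fun x => H x - besselJ v x ^ 2 - besselJ (v + 1) x ^ 2, ?_, ?_, ?_⟩
  · rw [e]
    have h3 : Tendsto (fun x : ℝ => 2 * (v + 1) / x) atTop (𝓝 0) :=
      tendsto_const_nhds.div_atTop tendsto_id
    have := (h3.mul h1).sub h0
    simp only [mul_zero, sub_zero] at this
    refine this.congr' ?_
    filter_upwards [eventually_gt_atTop 0] with x hx using (besselJ_rec hv hx).symm
  · intro x hx
    have := ((hH x hx).sub ((besselJ_hasDerivAt_aux hv hx).pow 2)).sub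
      ((besselJ_hasDerivAt_succ hv hx).pow 2)
    convert! this using 1
    field_simp
    ring
  · have := (hH0.sub ((besselJ_tendsto_zero (v := v + 1) (by linarith)).pow 2)).sub
      ((besselJ_tendsto_zero (v := v + 1) (by linarith)).pow 2)
    simpa using this
  · have := (hH1.sub (h0.pow 2)).sub (h1.pow 2)
    simpa using this

lemma bessel_energy_tendsto :
    Tendsto (fun x => besselJ 0 x ^ 2 + besselJ 1 x ^ 2) atTop (𝓝 0) := by
  have d0 : ∀ x, 0 < x → HasDerivAt (besselJ 0) (- besselJ 1 x) x := by
    intro x hx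
    have := besselJ_hasDerivAt_aux (le_refl (0 : ℝ)) hx
    simpa using this
  have d1 : ∀ x, 0 < x → HasDerivAt (besselJ 1) (besselJ 0 x - besselJ 1 x / x) x := by
    intro x hx
    have := besselJ_hasDerivAt_succ (le_refl (0 : ℝ)) hx
    simp only [zero_add] at this
    convert! this using 1
    ring
  set E : ℝ → ℝ := fun x => besselJ 0 x ^ 2 + besselJ 1 x ^ 2 with hE
  have dE : ∀ x, 0 < x → HasDerivAt E (- (2 * besselJ 1 x ^ 2 / x)) x := by
    intro x hx
    have := ((d0 x hx).pow 2).add ((d1 x hx).pow 2)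
    convert! this using 1
    field_simp
    ring
  have aE : AntitoneOn E (Ici 1) := by
    refine antitoneOn_of_hasDerivWithinAt_nonpos (convex_Ici 1)
      (fun x hx => (dE x (by have := mem_Ici.1 hx; linarith)).continuousAt.continuousWithinAt)
      (f' := fun x => - (2 * besselJ 1 x ^ 2 / x)) ?_ ?_
    · intro x hx
      rw [interior_Ici] at hx
      exact (dE x (by have := mem_Ioi.1 hx; linarith)).hasDerivWithinAt
    · intro x hx
      rw [interior_Ici] at hx
      have : 0 < x := by have := mem_Ioi.1 hx; linarith
      have : 0 ≤ 2 * besselJ 1 x ^ 2 / x := by positivity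
      linarith
  set K := E 1 with hK
  have EK : ∀ x, 1 ≤ x → E x ≤ K := fun x hx => aE (by simp) hx hx
  have E0 : ∀ x, 0 ≤ E x := fun x => by simp only [hE]; positivity
  have hJJ : ∀ x, |besselJ 0 x * besselJ 1 x| ≤ E x / 2 := by
    intro x
    simp only [hE]
    rw [abs_le]
    constructor <;> nlinarith [sq_nonneg (besselJ 0 x + besselJ 1 x),
      sq_nonneg (besselJ 0 x - besselJ 1 x)]
  set G : ℝ → ℝ := fun x => x * E x - besselJ 0 x * besselJ 1 x - K * √x with hG
  have dG : ∀ x, 0 < x → HasDerivAt G (besselJ 0 x * besselJ 1 x / x - K * (1 / (2 * √x))) x := by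
    intro x hx
    have := (((hasDerivAt_id x).mul (dE x hx)).sub ((d0 x hx).mul (d1 x hx))).sub
      ((Real.hasDerivAt_sqrt hx.ne').const_mul K)
    convert! this using 1
    simp only [hE, id]
    field_simp
    ring
  have aG : AntitoneOn G (Ici 1) := by
    refine antitoneOn_of_hasDerivWithinAt_nonpos (convex_Ici 1)
      (fun x hx => (dG x (by have := mem_Ici.1 hx; linarith)).continuousAt.continuousWithinAt)
      (f' := fun x => besselJ 0 x * besselJ 1 x / x - K * (1 / (2 * √x))) ?_ ?_
    · intro x hx
      rw [interior_Ici] at hx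
      exact (dG x (by have := mem_Ioi.1 hx; linarith)).hasDerivWithinAt
    · intro x hx
      rw [interior_Ici] at hx
      have hx1 : 1 < x := hx
      have hx0 : 0 < x := by linarith
      have h1 : besselJ 0 x * besselJ 1 x ≤ K / 2 :=
        (le_abs_self _).trans ((hJJ x).trans (by linarith [EK x hx1.le]))
      have hK0 : 0 ≤ K := E0 1
      have hs : √x ≤ x := by
        rw [Real.sqrt_le_left hx0.le]; nlinarith
      have hs0 : 0 < √x := Real.sqrt_pos.2 hx0
      have h2 : besselJ 0 x * besselJ 1 x / x ≤ (K / 2) / x := by gcongr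
      have h3 : (K / 2) / x ≤ (K / 2) / √x := by gcongr
      have h4 : (K / 2) / √x = K * (1 / (2 * √x)) := by field_simp
      linarith
  have hb : ∀ x, 1 ≤ x → E x ≤ (K / 2 + G 1) / x + K / √x := by
    intro x hx
    have hx0 : 0 < x := by linarith
    have h1 : G x ≤ G 1 := aG (by simp) hx hx
    have h2 : besselJ 0 x * besselJ 1 x ≤ K / 2 :=
        (le_abs_self _).trans ((hJJ x).trans (by linarith [EK x hx]))
    have h3 : x * E x ≤ K / 2 + G 1 + K * √x := by
      have h5 : G x = x * E x - besselJ 0 x * besselJ 1 x - K * √x := rfl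
      linarith
    have hs0 : 0 < √x := Real.sqrt_pos.2 hx0
    have h4 : K / √x = K * √x / x := by
      rw [div_eq_div_iff hs0.ne' hx0.ne', mul_assoc, Real.mul_self_sqrt hx0.le]
    rw [h4, ← add_div, le_div_iff₀ hx0]
    linarith
  have hlim : Tendsto (fun x => (K / 2 + G 1) / x + K / √x) atTop (𝓝 0) := by
    have h1 : Tendsto (fun x : ℝ => (K / 2 + G 1) / x) atTop (𝓝 0) :=
      tendsto_const_nhds.div_atTop tendsto_id
    have h2 : Tendsto (fun x : ℝ => K / √x) atTop (𝓝 0) :=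
      tendsto_const_nhds.div_atTop Real.tendsto_sqrt_atTop
    simpa using h1.add h2
  refine squeeze_zero' (Eventually.of_forall E0) ?_ hlim
  filter_upwards [eventually_ge_atTop 1] with x hx using hb x hx

lemma tendsto_of_sq {f g : ℝ → ℝ} (h : Tendsto (fun x => f x ^ 2 + g x ^ 2) atTop (𝓝 0)) :
    Tendsto f atTop (𝓝 0) := by
  have h1 : Tendsto (fun x => f x ^ 2) atTop (𝓝 0) :=
    squeeze_zero (fun x => sq_nonneg _) (fun x => by linarith [sq_nonneg (g x)]) h
  have h2 := (Real.continuous_sqrt.tendsto 0).comp h1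
  rw [Real.sqrt_zero] at h2
  rw [tendsto_zero_iff_abs_tendsto_zero]
  refine h2.congr ?_
  intro x
  simp [Real.sqrt_sq_eq_abs]

lemma BGood_zero : BGood 0 := by
  refine ⟨le_refl _, tendsto_of_sq bessel_energy_tendsto, ?_, fun _ => 1, ?_, ?_, ?_⟩
  · rw [zero_add]
    refine tendsto_of_sq (g := besselJ 0) ?_
    simpa [add_comm] using bessel_energy_tendsto
  · intro x hx
    simpa using hasDerivAt_const x (1 : ℝ)
  · have := (besselJ_zero_tendsto.pow 2).const_sub 1
    simpa using this
  · exact tendsto_const_nhds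

lemma BGood.integral {v : ℝ} (hv : 0 < v) (h : BGood v) :
    ∫ x in Ioi (0 : ℝ), 2 * v * besselJ v x ^ 2 / x = 1 := by
  obtain ⟨-, h0, h1, H, hH, hH0, hH1⟩ := h
  have hz : Tendsto H (𝓝[>] 0) (𝓝 0) := by
    have := hH0.add ((besselJ_tendsto_zero hv).pow 2)
    simpa using this
  set F : ℝ → ℝ := Function.update H 0 0
  have hF : ∀ x : ℝ, 0 < x → F =ᶠ[𝓝 x] H := by
    intro x hx
    filter_upwards [lt_mem_nhds hx] with z hz
    exact Function.update_of_ne hz.ne' _ _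
  have hF0 : F 0 = 0 := by simp [F]
  have hc : ContinuousWithinAt F (Ici 0) 0 := by
    rw [← continuousWithinAt_Ioi_iff_Ici]
    unfold ContinuousWithinAt
    rw [hF0]
    refine hz.congr' ?_
    filter_upwards [self_mem_nhdsWithin] with z hz
    exact (Function.update_of_ne (ne_of_gt hz) _ _).symm
  have := integral_Ioi_of_hasDerivAt_of_nonneg (g := F) (l := 1)
    (g' := fun x => 2 * v * besselJ v x ^ 2 / x) hc
    (fun x hx => (hH x hx).congr_of_eventuallyEq (hF x hx)) ?_ ?_
  · rw [this, hF0, sub_zero]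
  · intro x hx
    have hx : 0 < x := hx
    positivity
  · refine hH1.congr' ?_
    filter_upwards [eventually_gt_atTop 0] with z hz
    exact (Function.update_of_ne (ne_of_gt hz) _ _).symm

lemma sin_sq_exp_integral {t : ℝ} (ht : 0 < t) :
    IntegrableOn (fun x => t * Real.exp (-(t * x)) * Real.sin x ^ 2) (Ioi 0) ∧
    ∫ x in Ioi (0 : ℝ), t * Real.exp (-(t * x)) * Real.sin x ^ 2 = 2 / (t ^ 2 + 4) := by
  set g : ℝ → ℝ := fun x => Real.exp (-(t * x)) *
    (-(1 / 2) + (t ^ 2 * Real.cos (2 * x) - 2 * t * Real.sin (2 * x)) / (2 * (t ^ 2 + 4)))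
  have hd : ∀ x ∈ Ici (0 : ℝ),
      HasDerivAt g (t * Real.exp (-(t * x)) * Real.sin x ^ 2) x := by
    intro x _
    have e1 : HasDerivAt (fun x : ℝ => Real.exp (-(t * x))) (Real.exp (-(t * x)) * (-(t * 1))) x :=
      (((hasDerivAt_id x).const_mul t).neg).exp
    have e0 : HasDerivAt (fun x : ℝ => 2 * x) (2 * 1) x := (hasDerivAt_id x).const_mul 2
    have e2 := (((e0.cos.const_mul (t ^ 2)).sub (e0.sin.const_mul (2 * t))).div_const
      (2 * (t ^ 2 + 4))).const_add (-(1 / 2))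
    have := e1.mul e2
    convert! this using 1
    have : t ^ 2 + 4 ≠ 0 := by positivity
    simp only [Pi.sub_apply]
    rw [Real.sin_sq, Real.cos_sq]
    field_simp
    ring
  have hp : ∀ x ∈ Ioi (0 : ℝ), 0 ≤ t * Real.exp (-(t * x)) * Real.sin x ^ 2 := by
    intro x _; positivity
  have hl : Tendsto g atTop (𝓝 0) := by
    have he : Tendsto (fun x : ℝ => Real.exp (-(t * x))) atTop (𝓝 0) :=
      Real.tendsto_exp_neg_atTop_nhds_zero.comp (tendsto_id.const_mul_atTop ht)
    refine he.zero_mul_isBoundedUnder_le ?_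
    refine isBoundedUnder_of ⟨1 / 2 + (t ^ 2 + 2 * t) / (2 * (t ^ 2 + 4)), fun x => ?_⟩
    simp only [Function.comp, Real.norm_eq_abs]
    refine (abs_add_le _ _).trans ?_
    rw [abs_neg, abs_of_pos (by norm_num : (0 : ℝ) < 1 / 2), abs_div,
      abs_of_pos (by positivity : (0 : ℝ) < 2 * (t ^ 2 + 4))]
    gcongr
    refine (abs_sub _ _).trans ?_
    rw [abs_mul, abs_mul, abs_of_pos (by positivity : 0 < t ^ 2),
      abs_of_pos (by positivity : 0 < 2 * t)]
    have := Real.abs_cos_le_one (2 * x)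
    have := Real.abs_sin_le_one (2 * x)
    have : 0 < t ^ 2 := by positivity
    nlinarith
  refine ⟨integrableOn_Ioi_deriv_of_nonneg' hd hp hl, ?_⟩
  rw [integral_Ioi_of_hasDerivAt_of_nonneg' hd hp hl]
  simp only [g]
  simp
  field_simp
  ring

lemma exp_integral {x : ℝ} (hx : 0 < x) :
    IntegrableOn (fun t => t * Real.exp (-(t * x)) * Real.sin x ^ 2) (Ioi 0) ∧
    ∫ t in Ioi (0 : ℝ), t * Real.exp (-(t * x)) * Real.sin x ^ 2 = Real.sinc x ^ 2 := by
  set g : ℝ → ℝ := fun t => -(t * x * Real.exp (-(t * x)) + Real.exp (-(t * x))) *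
    (Real.sin x / x) ^ 2
  have hd : ∀ t ∈ Ici (0 : ℝ),
      HasDerivAt g (t * Real.exp (-(t * x)) * Real.sin x ^ 2) t := by
    intro t _
    have e0 : HasDerivAt (fun t : ℝ => t * x) (1 * x) t := (hasDerivAt_id t).mul_const x
    have e1 := e0.neg.exp
    have := ((e0.mul e1).add e1).neg.mul_const ((Real.sin x / x) ^ 2)
    convert! this using 1
    simp only [Pi.neg_apply]
    field_simp
    ring
  have hp : ∀ t ∈ Ioi (0 : ℝ), 0 ≤ t * Real.exp (-(t * x)) * Real.sin x ^ 2 := by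
    intro t ht
    have : 0 < t := ht
    positivity
  have hl : Tendsto g atTop (𝓝 0) := by
    have ht : Tendsto (fun t : ℝ => t * x) atTop atTop := tendsto_id.atTop_mul_const hx
    have he : Tendsto (fun t : ℝ => Real.exp (-(t * x))) atTop (𝓝 0) :=
      Real.tendsto_exp_neg_atTop_nhds_zero.comp ht
    have he2 : Tendsto (fun t : ℝ => t * x * Real.exp (-(t * x))) atTop (𝓝 0) := by
      have := (Real.tendsto_pow_mul_exp_neg_atTop_nhds_zero 1).comp ht
      simpa [Function.comp_def] using this
    have := (he2.add he).neg.mul_const ((Real.sin x / x) ^ 2)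
    rw [add_zero, neg_zero, zero_mul] at this
    exact this
  refine ⟨integrableOn_Ioi_deriv_of_nonneg' hd hp hl, ?_⟩
  rw [integral_Ioi_of_hasDerivAt_of_nonneg' hd hp hl, Real.sinc_of_ne_zero hx.ne']
  simp [g]

lemma arctan_integral :
    IntegrableOn (fun t : ℝ => 2 / (t ^ 2 + 4)) (Ioi 0) ∧
    ∫ t in Ioi (0 : ℝ), 2 / (t ^ 2 + 4) = π / 2 := by
  have hd : ∀ t ∈ Ici (0 : ℝ),
      HasDerivAt (fun t => Real.arctan (t / 2)) (2 / (t ^ 2 + 4)) t := by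
    intro t _
    have := ((hasDerivAt_id t).div_const 2).arctan
    convert! this using 1
    simp only [id]
    have : 1 + (t / 2) ^ 2 ≠ 0 := by positivity
    field_simp
    ring
  have hp : ∀ t ∈ Ioi (0 : ℝ), 0 ≤ 2 / (t ^ 2 + 4) := by
    intro t _; positivity
  have hl : Tendsto (fun t => Real.arctan (t / 2)) atTop (𝓝 (π / 2)) := by
    have h1 : Tendsto (fun t : ℝ => t / 2) atTop atTop := tendsto_id.atTop_div_const (by norm_num)
    have := (Real.tendsto_arctan_atTop.mono_right nhdsWithin_le_nhds).comp h1
    exact this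
  refine ⟨integrableOn_Ioi_deriv_of_nonneg' hd hp hl, ?_⟩
  rw [integral_Ioi_of_hasDerivAt_of_nonneg' hd hp hl]
  simp

lemma sinc_sq_lintegral :
    ∫⁻ x in Ioi (0 : ℝ), ENNReal.ofReal (Real.sinc x ^ 2) = ENNReal.ofReal (π / 2) := by
  have h1 : ∫⁻ x in Ioi (0 : ℝ), ENNReal.ofReal (Real.sinc x ^ 2) =
      ∫⁻ x in Ioi (0 : ℝ), ∫⁻ t in Ioi (0 : ℝ),
        ENNReal.ofReal (t * Real.exp (-(t * x)) * Real.sin x ^ 2) := by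
    refine setLIntegral_congr_fun measurableSet_Ioi ?_
    intro x hx
    simp only
    rw [← (exp_integral hx).2, ofReal_integral_eq_lintegral_ofReal (exp_integral hx).1]
    filter_upwards [ae_restrict_mem measurableSet_Ioi] with t ht
    have : 0 < t := ht
    simp only [Pi.zero_apply]
    positivity
  rw [h1, lintegral_lintegral_swap]
  · rw [← arctan_integral.2, ofReal_integral_eq_lintegral_ofReal arctan_integral.1]
    · refine setLIntegral_congr_fun measurableSet_Ioi ?_
      intro t ht
      simp only
      rw [← (sin_sq_exp_integral ht).2,
        ofReal_integral_eq_lintegral_ofReal (sin_sq_exp_integral ht).1]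
      filter_upwards with x
      have : 0 < t := ht
      simp only [Pi.zero_apply]
      positivity
    · filter_upwards with x
      simp only [Pi.zero_apply]
      positivity
  · refine Measurable.aemeasurable ?_
    simp only [Function.uncurry_def]
    fun_prop

lemma sinc_sq_integrable : IntegrableOn (fun x => Real.sinc x ^ 2) (Ioi 0) := by
  refine ⟨(Real.continuous_sinc.pow 2).aestronglyMeasurable, ?_⟩
  rw [hasFiniteIntegral_iff_ofReal (by filter_upwards with x; simp only [Pi.zero_apply]; positivity),
    sinc_sq_lintegral]
  exact ENNReal.ofReal_lt_top

lemma sinc_sq_integral : ∫ x in Ioi (0 : ℝ), Real.sinc x ^ 2 = π / 2 := by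
  rw [integral_eq_lintegral_of_nonneg_ae (f := fun x => Real.sinc x ^ 2) (by filter_upwards with x; simp only [Pi.zero_apply]; positivity)
    (Real.continuous_sinc.pow 2).aestronglyMeasurable, sinc_sq_lintegral,
    ENNReal.toReal_ofReal (by positivity)]

lemma half_gamma (k : ℕ) :
    (Nat.factorial k : ℝ) * Real.Gamma ((k : ℝ) + 1 / 2 + 1) * 2 ^ (2 * k + 1) =
      (Nat.factorial (2 * k + 1) : ℝ) * √π := by
  induction k with
  | zero =>
    rw [Real.Gamma_add_one (by norm_num)]
    simp [Real.Gamma_one_half_eq, -one_div]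
    ring
  | succ k ih =>
    have h : ((k + 1 : ℕ) : ℝ) + 1 / 2 + 1 = ((k : ℝ) + 1 / 2 + 1) + 1 := by push_cast; ring
    have h0 : (0 : ℝ) < (k : ℝ) + 1 / 2 + 1 := by positivity
    rw [h, Real.Gamma_add_one h0.ne']
    have e : 2 * (k + 1) + 1 = (2 * k + 1) + 1 + 1 := by ring
    rw [e, Nat.factorial_succ, Nat.factorial_succ, Nat.factorial_succ, pow_succ, pow_succ]
    push_cast
    linear_combination ((k : ℝ) + 1) * (2 * k + 3) * 2 * ih

lemma besselJ_half {x : ℝ} (hx : 0 < x) :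
    besselJ (1 / 2) x = √(2 / π) * (Real.sin x / √x) := by
  rw [besselJ_eq hx]
  have h1 : bL (1 / 2) (x ^ 2 / 4) = 2 / √π * (Real.sin x / x) := by
    unfold bL
    have := (Real.hasSum_sin x).mul_left (2 / √π / x)
    rw [show 2 / √π * (Real.sin x / x) = 2 / √π / x * Real.sin x by ring, ← this.tsum_eq]
    congr 1
    ext k
    unfold bc
    have hg := half_gamma k
    have hp := bgamma_pos (by norm_num : (0 : ℝ) ≤ 1 / 2) k
    have hs : 0 < √π := Real.sqrt_pos.2 Real.pi_pos
    have hf : (0 : ℝ) < Nat.factorial k := by positivity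
    have hf' : (0 : ℝ) < Nat.factorial (2 * k + 1) := by positivity
    have e : (x ^ 2 / 4) ^ k = x ^ (2 * k) / 2 ^ (2 * k) := by
      rw [div_pow, ← pow_mul, pow_mul 2 2 k]; norm_num
    have e2 : (Nat.factorial k : ℝ) * Real.Gamma ((k : ℝ) + 1 / 2 + 1) =
      (Nat.factorial (2 * k + 1) : ℝ) * √π / 2 ^ (2 * k + 1) := by
      rw [← hg]; field_simp
    rw [e, e2, pow_succ x]
    field_simp
    ring
  rw [h1, ← Real.sqrt_eq_rpow, Real.sqrt_div hx.le, Real.sqrt_div (by norm_num)]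
  have hs : 0 < √π := Real.sqrt_pos.2 Real.pi_pos
  have hs2 : 0 < √x := Real.sqrt_pos.2 hx
  have h2 : √2 * √2 = (2 : ℝ) := Real.mul_self_sqrt (by norm_num)
  have h3 : √x * √x = x := Real.mul_self_sqrt hx.le
  have h4 : 0 < √(2 : ℝ) := by positivity
  rw [show Real.sin x / x = Real.sin x / (√x * √x) by rw [h3]]
  field_simp
  linear_combination (-Real.sin x) * h2

lemma besselJ_three_half {x : ℝ} (hx : 0 < x) :
    besselJ (1 / 2 + 1) x = √(2 / π) * ((Real.sin x / x - Real.cos x) / √x) := by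
  have h1 := besselJ_hasDerivAt_aux (by norm_num : (0 : ℝ) ≤ 1 / 2) hx
  have hs2 : 0 < √x := Real.sqrt_pos.2 hx
  have h2 := ((Real.hasDerivAt_sin x).div (Real.hasDerivAt_sqrt hx.ne') hs2.ne').const_mul √(2 / π)
  have h3 : besselJ (1 / 2) =ᶠ[𝓝 x] (fun x : ℝ => √(2 / π) * (Real.sin x / √x)) := by
    filter_upwards [lt_mem_nhds hx] with z hz using besselJ_half hz
  have h4 := h1.unique (h2.congr_of_eventuallyEq h3)
  rw [besselJ_half hx] at h4
  have h5 : √x ^ 2 = x := Real.sq_sqrt hx.le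
  rw [h5] at h4
  have h6 : besselJ (1 / 2 + 1) x = 1 / 2 / x * (√(2 / π) * (Real.sin x / √x)) -
    √(2 / π) * ((Real.cos x * √x - Real.sin x * (1 / (2 * √x))) / x) := by linarith
  rw [h6]
  have h7 : Real.cos x * √x / x = Real.cos x / √x := by
    rw [div_eq_div_iff hx.ne' hs2.ne', mul_assoc, ← sq, h5]
  rw [sub_div, h7]
  field_simp
  ring

lemma BGood_half : BGood (1 / 2) := by
  have hs : Tendsto (fun x : ℝ => (√x)⁻¹) atTop (𝓝 0) :=
    tendsto_inv_atTop_zero.comp Real.tendsto_sqrt_atTop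
  refine ⟨by norm_num, ?_, ?_, fun x => 2 / π * ∫ t in (0 : ℝ)..x, Real.sinc t ^ 2, ?_, ?_, ?_⟩
  · have h1 : Tendsto (fun x : ℝ => (√x)⁻¹ * Real.sin x) atTop (𝓝 0) := by
      refine hs.zero_mul_isBoundedUnder_le (isBoundedUnder_of ⟨1, fun x => ?_⟩)
      exact Real.abs_sin_le_one x
    have h2 := h1.const_mul √(2 / π)
    rw [mul_zero] at h2
    refine h2.congr' ?_
    filter_upwards [eventually_gt_atTop 0] with x hx
    rw [besselJ_half hx]; ring
  · have h1 : Tendsto (fun x : ℝ => (√x)⁻¹ * (Real.sinc x - Real.cos x)) atTop (𝓝 0) := by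
      refine hs.zero_mul_isBoundedUnder_le (isBoundedUnder_of ⟨1 + 1, fun x => ?_⟩)
      exact (abs_sub _ _).trans (add_le_add (Real.abs_sinc_le_one x) (Real.abs_cos_le_one x))
    have h2 := h1.const_mul √(2 / π)
    rw [mul_zero] at h2
    refine h2.congr' ?_
    filter_upwards [eventually_gt_atTop 0] with x hx
    rw [besselJ_three_half hx, Real.sinc_of_ne_zero hx.ne']; ring
  · intro x hx
    have hc : Continuous (fun t => Real.sinc t ^ 2) := Real.continuous_sinc.pow 2
    have := (hc.integral_hasStrictDerivAt 0 x).hasDerivAt.const_mul (2 / π)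
    convert! this using 1
    rw [besselJ_half hx, Real.sinc_of_ne_zero hx.ne', mul_pow, div_pow, div_pow,
      Real.sq_sqrt hx.le, Real.sq_sqrt (by positivity)]
    field_simp
  · have hc : Continuous (fun t => Real.sinc t ^ 2) := Real.continuous_sinc.pow 2
    have h1 := ((hc.integral_hasStrictDerivAt 0 0).hasDerivAt.const_mul (2 / π)).continuousAt.tendsto
    have h2 := h1.mono_left (nhdsWithin_le_nhds (s := Ioi 0))
    have h3 := (besselJ_tendsto_zero (by norm_num : (0 : ℝ) < 1 / 2)).pow 2
    have := h2.sub h3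
    simpa using this
  · have := (intervalIntegral_tendsto_integral_Ioi 0 sinc_sq_integrable tendsto_id).const_mul (2 / π)
    rw [sinc_sq_integral] at this
    convert! this using 2
    field_simp

lemma final_of_good (d : ℕ) (hd : 1 ≤ d) (h : BGood ((d : ℝ) / 2)) :
    (∫ τ : EuclideanSpace ℝ (Fin d), besselJ ((d : ℝ) / 2) ‖τ‖ ^ 2 / ‖τ‖ ^ d) =
      Real.pi ^ ((d : ℝ) / 2) / Real.Gamma ((d : ℝ) / 2 + 1) := by
  have hd0 : (0 : ℝ) < d := by exact_mod_cast hd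
  have : Nonempty (Fin d) := ⟨⟨0, hd⟩⟩
  have : Nontrivial (EuclideanSpace ℝ (Fin d)) := by
    apply Module.nontrivial_of_finrank_pos (R := ℝ)
    rw [finrank_euclideanSpace, Fintype.card_fin]; exact hd
  have hI := h.integral (by positivity)
  rw [integral_fun_norm_addHaar volume (fun r => besselJ ((d : ℝ) / 2) r ^ 2 / r ^ d)]
  rw [finrank_euclideanSpace, Fintype.card_fin]
  have h1 : ∫ y in Ioi (0 : ℝ), y ^ (d - 1) • (besselJ ((d : ℝ) / 2) y ^ 2 / y ^ d) =
      (1 / d) * ∫ x in Ioi (0 : ℝ), 2 * ((d : ℝ) / 2) * besselJ ((d : ℝ) / 2) x ^ 2 / x := by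
    rw [← integral_const_mul]
    refine setIntegral_congr_fun measurableSet_Ioi ?_
    intro x hx
    have hx : 0 < x := hx
    obtain ⟨n, rfl⟩ : ∃ n, d = n + 1 := ⟨d - 1, by omega⟩
    simp only [Nat.add_sub_cancel, smul_eq_mul]
    rw [pow_succ x n]
    field_simp
  rw [h1, hI]
  have h2 : (volume : Measure (EuclideanSpace ℝ (Fin d))).real (Metric.ball 0 1) =
      Real.pi ^ ((d : ℝ) / 2) / Real.Gamma ((d : ℝ) / 2 + 1) := by
    rw [Measure.real, EuclideanSpace.volume_ball]
    have hg : 0 < Real.Gamma ((d : ℝ) / 2 + 1) := Real.Gamma_pos_of_pos (by positivity)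
    simp only [ENNReal.ofReal_one, one_pow, one_mul, Fintype.card_fin]
    rw [ENNReal.toReal_ofReal (by positivity), Real.sqrt_eq_rpow, ← Real.rpow_natCast,
      ← Real.rpow_mul Real.pi_pos.le]
    congr 2
    ring
  rw [h2]
  simp only [smul_eq_mul, nsmul_eq_mul]
  field_simp

lemma BGood_add {v : ℝ} (h : BGood v) (n : ℕ) : BGood (v + n) := by
  induction n with
  | zero => simpa using h
  | succ n ih =>
    have := ih.succ
    rw [add_assoc] at this
    exact_mod_cast this

/-- For every `d ≥ 1`,
`∫_{ℝ^d} J_{d/2}(‖τ‖)²/‖τ‖^d dτ = π^{d/2}/Γ(d/2+1)`. -/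
theorem stmt_17 (d : ℕ) (hd : 1 ≤ d) :
    (∫ τ : EuclideanSpace ℝ (Fin d), besselJ ((d : ℝ) / 2) ‖τ‖ ^ 2 / ‖τ‖ ^ d) =
      Real.pi ^ ((d : ℝ) / 2) / Real.Gamma ((d : ℝ) / 2 + 1) := by
  apply final_of_good d hd
  rcases Nat.even_or_odd' d with ⟨n, rfl | rfl⟩
  · have := BGood_add BGood_zero n
    convert! this using 1
    push_cast; ring
  · have := BGood_add BGood_half n
    convert! this using 1
    push_cast; ring

end
end

section
/- For every integer d ≥ 1, lim_{c → ∞} (1/c^d) · (c²/(2π))^d · ∫_{B^d} ∫_{B^d} J_{d/2}(c‖x−y‖)² / (c‖x−y‖)^d dx dy = 1/(2^d Γ(d/2+1)²). Equivalently, the squared Hilbert–Schmidt norm of the operator Q_c on L²(B^d) with kernel (c/(2π))^d (2π)^{d/2} J_{d/2}(c‖x−y‖)/(c‖x−y‖)^{d/2} satisfies ‖Q_c‖²_{HS} = c^d/(2^d Γ(d/2+1)²) + o(c^d) as c → ∞. -/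
open MeasureTheory Real

noncomputable section

lemma aux_oneD (k : ℕ) : ∫ t : ℝ, t ^ (2 * k) * exp (-t ^ 2) = Gamma (k + 1 / 2) := by
  have h1 : ∀ t : ℝ, t ^ (2 * k) * exp (-t ^ 2) = (fun s : ℝ => s ^ (2 * k) * exp (-s ^ 2)) |t| := by
    intro t
    simp only [sq_abs, pow_mul]
  rw [integral_congr_ae (Filter.Eventually.of_forall h1)]
  rw [integral_comp_abs (f := fun s : ℝ => s ^ (2 * k) * exp (-s ^ 2))]
  have h2 := integral_rpow_mul_exp_neg_rpow (p := 2) (q := ((2 * k : ℕ) : ℝ)) (by norm_num)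
    (by have : (0 : ℝ) ≤ ((2 * k : ℕ) : ℝ) := Nat.cast_nonneg _
        linarith)
  have h3 : ∫ x in Set.Ioi (0 : ℝ), x ^ (((2 * k : ℕ) : ℝ)) * exp (-x ^ (2 : ℝ))
      = ∫ x in Set.Ioi (0 : ℝ), x ^ (2 * k) * exp (-x ^ 2) := by
    congr 1
    ext x
    rw [Real.rpow_natCast]
    norm_cast
  rw [h3] at h2
  rw [h2]
  push_cast
  rw [← mul_assoc]
  norm_num
  congr 1
  ring

lemma aux_gauss (d : ℕ) (hd : 1 ≤ d) (k : ℕ) (e : EuclideanSpace ℝ (Fin d)) (he : ‖e‖ = 1) :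
    ∫ x : EuclideanSpace ℝ (Fin d), (inner ℝ e x) ^ (2 * k) * exp (-‖x‖ ^ 2)
      = Gamma (k + 1 / 2) * (√π) ^ (d - 1) := by
  let i0 : Fin d := ⟨0, hd⟩
  obtain ⟨b, hb⟩ := Orthonormal.exists_orthonormalBasis_extension_of_card_eq (𝕜 := ℝ)
    (E := EuclideanSpace ℝ (Fin d)) (ι := Fin d) (v := fun _ => e) (s := {i0}) (by simp)
    (by
      rw [orthonormal_iff_ite]
      rintro ⟨i, hi⟩ ⟨j, hj⟩
      simp at hi hj
      subst hi hj
      simp [he])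
  have hb0 : b i0 = e := hb i0 rfl
  rw [← b.measurePreserving_repr_symm.integral_comp (b.repr.symm.toHomeomorph.measurableEmbedding)]
  rw [← (PiLp.volume_preserving_toLp (Fin d)).integral_comp
    (MeasurableEquiv.toLp 2 (Fin d → ℝ)).measurableEmbedding]
  have h1 : ∀ y : Fin d → ℝ, (inner ℝ e (b.repr.symm (WithLp.toLp 2 y))) ^ (2 * k) *
      exp (-‖b.repr.symm (WithLp.toLp 2 y)‖ ^ 2)
      = ∏ i, (fun (i : Fin d) (t : ℝ) => (if i = i0 then t ^ (2 * k) else 1) * exp (-t ^ 2)) i (y i) := by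
    intro y
    rw [LinearIsometryEquiv.norm_map, EuclideanSpace.norm_sq_eq, Finset.prod_mul_distrib,
      ← Real.exp_sum, ← Finset.sum_neg_distrib]
    congr 1
    · rw [← hb0, ← b.repr_apply_apply]
      simp
    · simp
  rw [integral_congr_ae (Filter.Eventually.of_forall h1)]
  refine (integral_fintype_prod_volume_eq_prod (fun (i : Fin d) (t : ℝ) => (if i = i0 then t ^ (2 * k) else 1) * exp (-t ^ 2))).trans ?_
  rw [← Finset.mul_prod_erase _ _ (Finset.mem_univ i0)]
  simp only [if_true]
  rw [aux_oneD]
  congr 1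
  rw [Finset.prod_congr rfl (g := fun _ => √π)]
  · simp
  · intro i hi
    have := integral_gaussian 1
    simp at this
    simp [Finset.ne_of_mem_erase hi, this]

lemma aux_scale (d : ℕ) (k : ℕ) (e : EuclideanSpace ℝ (Fin d)) (s : ℝ) (hs : 0 < s) :
    ∫⁻ x in Metric.ball (0 : EuclideanSpace ℝ (Fin d)) s, ENNReal.ofReal ((inner ℝ e x) ^ (2 * k))
     = ENNReal.ofReal (s ^ (2 * k + d)) *
      ENNReal.ofReal (∫ x in Metric.ball (0 : EuclideanSpace ℝ (Fin d)) 1, (inner ℝ e x) ^ (2 * k)) := by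
  rw [← ofReal_integral_eq_lintegral_ofReal, ← ENNReal.ofReal_mul (by positivity)]
  · congr 1
    have h := Measure.setIntegral_comp_smul_of_pos (volume : Measure (EuclideanSpace ℝ (Fin d)))
      (fun x => (inner ℝ e x) ^ (2 * k)) (Metric.ball 0 1) hs
    rw [smul_unitBall_of_pos hs] at h
    simp only [inner_smul_right, mul_pow, integral_const_mul, finrank_euclideanSpace,
      Fintype.card_fin, smul_eq_mul] at h
    rw [pow_add, mul_comm (s ^ (2 * k)), mul_assoc, h, ← mul_assoc, mul_inv_cancel₀ (by positivity), one_mul]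
  · have : IntegrableOn (fun x : EuclideanSpace ℝ (Fin d) => (inner ℝ e x) ^ (2 * k)) (Metric.closedBall 0 s) :=
      ContinuousOn.integrableOn_compact (isCompact_closedBall _ _) (by fun_prop)
    exact this.mono_set Metric.ball_subset_closedBall
  · filter_upwards with x
    simp only [pow_mul]
    positivity

lemma aux_tail (t : ℝ) (ht : 0 ≤ t) : ∫⁻ s in Set.Ioi t, ENNReal.ofReal (2 * s * exp (-s ^ 2))
   = ENNReal.ofReal (exp (-t ^ 2)) := by
  have hd : ∀ x ∈ Set.Ici t, HasDerivAt (fun s : ℝ => -exp (-s ^ 2)) (2 * x * exp (-x ^ 2)) x := by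
    intro x _
    have : HasDerivAt (fun s : ℝ => -exp (-s ^ 2)) (-(exp (-x ^ 2) * (-(((2 : ℕ) : ℝ) * x ^ (2 - 1))))) x :=
      (((hasDerivAt_pow 2 x).neg).exp).neg
    convert this using 1
    push_cast
    ring
  have hn : ∀ x ∈ Set.Ioi t, 0 ≤ 2 * x * exp (-x ^ 2) := by
    intro x hx
    have : 0 < x := lt_of_le_of_lt ht hx
    positivity
  have hl : Filter.Tendsto (fun s : ℝ => -exp (-s ^ 2)) Filter.atTop (nhds 0) := by
    have h : Filter.Tendsto (fun s : ℝ => -s ^ 2) Filter.atTop Filter.atBot :=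
      Filter.tendsto_neg_atTop_atBot.comp (Filter.tendsto_pow_atTop (by norm_num))
    simpa using (Real.tendsto_exp_atBot.comp h).neg
  have h1 := integral_Ioi_of_hasDerivAt_of_nonneg' hd hn hl
  have h2 := integrableOn_Ioi_deriv_of_nonneg' hd hn hl
  rw [← ofReal_integral_eq_lintegral_ofReal h2, h1]
  · simp
  · filter_upwards [ae_restrict_mem measurableSet_Ioi] with s hs using hn s hs

lemma aux_half (m : ℕ) : ∫⁻ s in Set.Ioi (0:ℝ), ENNReal.ofReal (s ^ m * (2 * s * exp (-s ^ 2)))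
   = ENNReal.ofReal (Gamma (m / 2 + 1)) := by
  have hpos : 0 < Gamma ((m : ℝ) / 2 + 1) := Gamma_pos_of_pos (by positivity)
  have h2 := integral_rpow_mul_exp_neg_rpow (p := 2) (q := ((m + 1 : ℕ) : ℝ)) (by norm_num)
    (by have : (0 : ℝ) ≤ ((m + 1 : ℕ) : ℝ) := Nat.cast_nonneg _
        linarith)
  have h3 : ∫ x in Set.Ioi (0 : ℝ), x ^ m * (2 * x * exp (-x ^ 2)) = Gamma (m / 2 + 1) := by
    calc _ = 2 * ∫ x in Set.Ioi (0 : ℝ), x ^ (((m + 1 : ℕ) : ℝ)) * exp (-x ^ (2 : ℝ)) := by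
          rw [← integral_const_mul]
          congr 1
          ext x
          rw [Real.rpow_natCast]
          norm_cast
          ring
      _ = _ := by
          rw [h2, ← mul_assoc]
          norm_num
          congr 1
          ring
  rw [← h3, ofReal_integral_eq_lintegral_ofReal]
  · exact .of_integral_ne_zero (by rw [h3]; exact hpos.ne')
  · filter_upwards [ae_restrict_mem measurableSet_Ioi] with s hs
    have : (0:ℝ) < s := hs
    simp only [Pi.zero_apply]
    positivity

lemma aux_moment (d : ℕ) (hd : 1 ≤ d) (k : ℕ) (e : EuclideanSpace ℝ (Fin d)) (he : ‖e‖ = 1) :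
    ∫ x in Metric.ball (0 : EuclideanSpace ℝ (Fin d)) 1, (inner ℝ e x) ^ (2 * k)
      = Gamma (k + 1 / 2) * (√π) ^ (d - 1) / Gamma (k + d / 2 + 1) := by
  set M := ∫ x in Metric.ball (0 : EuclideanSpace ℝ (Fin d)) 1, (inner ℝ e x) ^ (2 * k) with hM
  have hM0 : 0 ≤ M := by
    apply integral_nonneg
    intro x
    simp only [pow_mul, Pi.zero_apply]
    positivity
  have hG1 : 0 < Gamma ((k : ℝ) + 1 / 2) := Gamma_pos_of_pos (by positivity)
  have hG2 : 0 < Gamma ((k : ℝ) + d / 2 + 1) := Gamma_pos_of_pos (by positivity)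
  have hg := aux_gauss d hd k e he
  have hint : Integrable (fun x : EuclideanSpace ℝ (Fin d) =>
      (inner ℝ e x) ^ (2 * k) * exp (-‖x‖ ^ 2)) :=
    .of_integral_ne_zero (by rw [hg]; positivity)
  have key : ENNReal.ofReal (Gamma (k + 1 / 2) * (√π) ^ (d - 1))
      = ENNReal.ofReal (Gamma (k + d / 2 + 1)) * ENNReal.ofReal M := by
    rw [← hg, ofReal_integral_eq_lintegral_ofReal hint (by
      filter_upwards with x
      simp only [pow_mul, Pi.zero_apply]
      positivity)]
    have hpow : ∀ x : EuclideanSpace ℝ (Fin d), 0 ≤ (inner ℝ e x) ^ (2 * k) := by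
      intro x
      rw [pow_mul]
      positivity
    calc ∫⁻ x : EuclideanSpace ℝ (Fin d), ENNReal.ofReal ((inner ℝ e x) ^ (2 * k) * exp (-‖x‖ ^ 2))
        = ∫⁻ x : EuclideanSpace ℝ (Fin d), ∫⁻ s : ℝ, ENNReal.ofReal ((inner ℝ e x) ^ (2 * k)) *
            (Set.indicator {p : EuclideanSpace ℝ (Fin d) × ℝ | ‖p.1‖ < p.2}
              (fun p => ENNReal.ofReal (2 * p.2 * exp (-p.2 ^ 2)))) (x, s) := by
          apply lintegral_congr
          intro x
          rw [ENNReal.ofReal_mul (hpow x), ← aux_tail _ (norm_nonneg x),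
            lintegral_const_mul' _ _ ENNReal.ofReal_ne_top, ← lintegral_indicator measurableSet_Ioi]
          rfl
      _ = ∫⁻ s : ℝ, ∫⁻ x : EuclideanSpace ℝ (Fin d), ENNReal.ofReal ((inner ℝ e x) ^ (2 * k)) *
            (Set.indicator {p : EuclideanSpace ℝ (Fin d) × ℝ | ‖p.1‖ < p.2}
              (fun p => ENNReal.ofReal (2 * p.2 * exp (-p.2 ^ 2)))) (x, s) := by
          apply lintegral_lintegral_swap
          apply Measurable.aemeasurable
          apply Measurable.mul
          · fun_prop
          · apply Measurable.indicator
            · fun_prop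
            · exact measurableSet_lt (by fun_prop) (by fun_prop)
      _ = ∫⁻ s : ℝ, (Set.Ioi (0:ℝ)).indicator (fun s => ENNReal.ofReal (s ^ (2 * k + d) * (2 * s * exp (-s ^ 2))) *
            ENNReal.ofReal M) s := by
          apply lintegral_congr
          intro s
          by_cases hs : 0 < s
          · rw [Set.indicator_of_mem (show s ∈ Set.Ioi (0:ℝ) from hs), ENNReal.ofReal_mul (by positivity),
              mul_right_comm, ← aux_scale d k e s hs, ← lintegral_indicator Metric.isOpen_ball.measurableSet,
              ← lintegral_mul_const' _ _ ENNReal.ofReal_ne_top]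
            apply lintegral_congr
            intro x
            by_cases hx : ‖x‖ < s
            · simp [Set.indicator, hx]
            · simp [Set.indicator, hx]
          · rw [Set.indicator_of_notMem (show s ∉ Set.Ioi (0:ℝ) from hs)]
            rw [lintegral_eq_zero_iff']
            · filter_upwards with x
              have : ¬ ‖x‖ < s := fun h => hs (lt_of_le_of_lt (norm_nonneg x) h)
              simp [Set.indicator, this]
            · apply Measurable.aemeasurable
              apply Measurable.mul
              · fun_prop
              · have : Measurable (Set.indicator {p : EuclideanSpace ℝ (Fin d) × ℝ | ‖p.1‖ < p.2}
                  (fun p => ENNReal.ofReal (2 * p.2 * exp (-p.2 ^ 2)))) := by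
                  apply Measurable.indicator
                  · fun_prop
                  · exact measurableSet_lt (by fun_prop) (by fun_prop)
                exact this.comp (by fun_prop)
      _ = _ := by
          rw [lintegral_indicator measurableSet_Ioi, lintegral_mul_const' _ _ ENNReal.ofReal_ne_top,
            aux_half]
          congr 4
          push_cast
          ring
  rw [← ENNReal.ofReal_mul hG2.le, ENNReal.ofReal_eq_ofReal_iff (by positivity) (by positivity)] at key
  rw [key]
  field_simp

lemma aux_gamma (k : ℕ) : Gamma ((k : ℝ) + 1 / 2) = (Nat.factorial (2 * k)) * √π / (4 ^ k * Nat.factorial k) := by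
  induction k with
  | zero => simp [-one_div, Gamma_one_half_eq]
  | succ k ih =>
    push_cast
    rw [add_right_comm, Gamma_add_one (by positivity), ih, Nat.mul_add, Nat.factorial_succ k,
      show 2 * k + 2 * 1 = (2 * k + 1) + 1 by ring, Nat.factorial_succ, Nat.factorial_succ]
    push_cast
    field_simp
    ring

open FourierTransform SchwartzMap in
lemma aux_plancherel {E : Type*} [NormedAddCommGroup E] [InnerProductSpace ℝ E]
    [FiniteDimensional ℝ E] [MeasurableSpace E] [BorelSpace E] (f : E → ℂ) (h1 : Integrable f)
    (h2 : MemLp f 2) : MemLp (𝓕 f) 2 ∧ ∫ w, ‖𝓕 f w‖ ^ 2 = ∫ x, ‖f x‖ ^ 2 := by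
  have hcont : Continuous (𝓕 f) := VectorFourier.fourierIntegral_continuous
    continuous_fourierChar continuous_inner h1
  have hae : ((𝓕 (h2.toLp f) : Lp ℂ 2 (volume : Measure E)) : E → ℂ) =ᵐ[volume] 𝓕 f := by
    apply ae_eq_of_integral_contDiff_smul_eq
    · exact (Lp.memLp _).locallyIntegrable (by norm_num)
    · exact hcont.locallyIntegrable
    · intro g g_smooth g_cpt
      have hg₁ : HasCompactSupport (Complex.ofRealCLM ∘ g) := g_cpt.comp_left rfl
      have hg₂ : ContDiff ℝ (⊤ : ℕ∞) (Complex.ofRealCLM ∘ g) := by fun_prop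
      set G := hg₁.toSchwartzMap hg₂ with hG
      have e1 : ((𝓕 (h2.toLp f) : Lp ℂ 2 (volume : Measure E)) : 𝓢'(E, ℂ)) G
          = ∫ x, g x • ((𝓕 (h2.toLp f) : Lp ℂ 2 (volume : Measure E)) : E → ℂ) x := by
        rw [Lp.toTemperedDistribution_apply]
        simp [hG]
      rw [← e1, ← Lp.fourier_toTemperedDistribution_eq, TemperedDistribution.fourier_apply,
        Lp.toTemperedDistribution_apply]
      have e2 : ∫ ξ, (𝓕 (G : E → ℂ)) ξ • f ξ = ∫ x, G x • 𝓕 f x := by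
        simpa using! VectorFourier.integral_bilin_fourierIntegral_eq_flip
          (ContinuousLinearMap.lsmul ℂ ℂ) (L := innerₗ E)
          continuous_fourierChar continuous_inner G.integrable h1
      calc _ = ∫ ξ, (𝓕 (G : E → ℂ)) ξ • f ξ := by
            apply integral_congr_ae
            filter_upwards [h2.coeFn_toLp] with x hx
            rw [hx, SchwartzMap.fourier_coe]
        _ = ∫ x, G x • 𝓕 f x := e2
        _ = _ := by simp [hG]
  have hmem : MemLp (𝓕 f) 2 := (memLp_congr_ae hae).1 (Lp.memLp _)
  refine ⟨hmem, ?_⟩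
  have hn : ‖hmem.toLp (𝓕 f)‖ = ‖h2.toLp f‖ := by
    rw [← Lp.norm_fourier_eq (h2.toLp f)]
    congr 1
    apply Lp.ext
    exact hmem.coeFn_toLp.trans hae.symm
  have key : ∀ (u : E → ℂ) (hu : MemLp u 2), ∫ x, ‖u x‖ ^ 2 = ‖hu.toLp u‖ ^ 2 := by
    intro u hu
    rw [← @inner_self_eq_norm_sq ℂ, L2.inner_def]
    have : ∫ a, inner ℂ (hu.toLp u a) (hu.toLp u a) = ((∫ x, ‖u x‖ ^ 2 : ℝ) : ℂ) := by
      rw [← integral_complex_ofReal]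
      apply integral_congr_ae
      filter_upwards [hu.coeFn_toLp] with x hx
      rw [hx, inner_self_eq_norm_sq_to_K]
      simp
    rw [this]
    simp
  rw [key _ hmem, key _ h2, hn]

lemma aux_hasSum (d : ℕ) (hd : 1 ≤ d) (u : EuclideanSpace ℝ (Fin d)) :
    HasSum (fun k : ℕ => (√π) ^ d * ((-1 : ℝ) ^ k / (Nat.factorial k * Real.Gamma ((k : ℝ) + d / 2 + 1)) *
      (‖u‖ / 2) ^ (2 * k)))
      (∫ x in Metric.ball (0 : EuclideanSpace ℝ (Fin d)) 1, cos (inner ℝ u x)) := by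
  obtain ⟨e, he, hu⟩ : ∃ e : EuclideanSpace ℝ (Fin d), ‖e‖ = 1 ∧ u = ‖u‖ • e := by
    by_cases h : u = 0
    · refine ⟨EuclideanSpace.single ⟨0, hd⟩ 1, by simp, by simp [h]⟩
    · have : ‖u‖ ≠ 0 := norm_ne_zero_iff.2 h
      refine ⟨‖u‖⁻¹ • u, ?_, ?_⟩
      · rw [norm_smul, norm_inv, norm_norm, inv_mul_cancel₀ this]
      · rw [smul_smul, mul_inv_cancel₀ this, one_smul]
  set r := ‖u‖ with hr
  have hr0 : 0 ≤ r := norm_nonneg u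
  have hin : ∀ k : ℕ, IntegrableOn (fun x : EuclideanSpace ℝ (Fin d) =>
      (-1 : ℝ) ^ k * (inner ℝ u x) ^ (2 * k) / (Nat.factorial (2 * k))) (Metric.ball 0 1) := by
    intro k
    have : IntegrableOn (fun x : EuclideanSpace ℝ (Fin d) =>
      (-1 : ℝ) ^ k * (inner ℝ u x) ^ (2 * k) / (Nat.factorial (2 * k))) (Metric.closedBall 0 1) :=
      ContinuousOn.integrableOn_compact (isCompact_closedBall _ _) (by fun_prop)
    exact this.mono_set Metric.ball_subset_closedBall
  have hfin : volume (Metric.ball (0 : EuclideanSpace ℝ (Fin d)) 1) < ⊤ := measure_ball_lt_top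
  have hsum : Summable (fun k : ℕ => ∫ x in Metric.ball (0 : EuclideanSpace ℝ (Fin d)) 1,
      ‖(-1 : ℝ) ^ k * (inner ℝ u x) ^ (2 * k) / (Nat.factorial (2 * k))‖) := by
    have hs : Summable (fun k : ℕ => r ^ (2 * k) / (Nat.factorial (2 * k)) *
        volume.real (Metric.ball (0 : EuclideanSpace ℝ (Fin d)) 1)) := by
      apply Summable.mul_right
      exact (Real.summable_pow_div_factorial r).comp_injective
        (i := fun k : ℕ => 2 * k) (mul_right_injective₀ (by norm_num))
    refine Summable.of_nonneg_of_le (fun k => integral_nonneg fun x => norm_nonneg _) ?_ hs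
    intro k
    have := norm_setIntegral_le_of_norm_le_const (μ := volume)
      (f := fun x : EuclideanSpace ℝ (Fin d) => ‖(-1 : ℝ) ^ k * (inner ℝ u x) ^ (2 * k) / (Nat.factorial (2 * k))‖)
      (C := r ^ (2 * k) / (Nat.factorial (2 * k))) hfin ?_
    · exact (le_abs_self _).trans this
    · intro x hx
      have hx1 : ‖x‖ ≤ 1 := by simpa using (Metric.mem_ball.1 hx).le
      simp only [norm_norm, norm_div, norm_mul, norm_pow, norm_neg, norm_one, one_pow, one_mul,
        RCLike.norm_natCast]
      gcongr
      exact (norm_inner_le_norm u x).trans (by nlinarith [norm_nonneg u])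
  have h := hasSum_integral_of_summable_integral_norm hin hsum
  have hcos : ∀ x : EuclideanSpace ℝ (Fin d), ∑' k : ℕ, (-1 : ℝ) ^ k * (inner ℝ u x) ^ (2 * k) / (Nat.factorial (2 * k))
      = cos (inner ℝ u x) := fun x => (Real.hasSum_cos _).tsum_eq
  simp_rw [hcos] at h
  refine (congrArg (fun F => HasSum F _) (funext fun k => ?_)).mpr h
  have h1 : ∀ x : EuclideanSpace ℝ (Fin d), (-1 : ℝ) ^ k * (inner ℝ u x) ^ (2 * k) / (Nat.factorial (2 * k))
     = ((-1 : ℝ) ^ k * r ^ (2 * k) / (Nat.factorial (2 * k))) * (inner ℝ e x) ^ (2 * k) := by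
    intro x
    conv_lhs => rw [hu]
    rw [real_inner_smul_left, mul_pow]
    ring
  rw [integral_congr_ae (Filter.Eventually.of_forall h1), integral_const_mul, aux_moment d hd k e he,
    aux_gamma]
  have hG2 : 0 < Gamma ((k : ℝ) + d / 2 + 1) := Gamma_pos_of_pos (by positivity)
  have hp : (√π) ^ d = √π * (√π) ^ (d - 1) := by
    rw [← pow_succ', Nat.sub_add_cancel hd]
  rw [hp, div_pow, pow_mul 2 2 k]
  norm_num
  field_simp

lemma aux_bessel (d : ℕ) (hd : 1 ≤ d) (u : EuclideanSpace ℝ (Fin d)) (hu : u ≠ 0) :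
    (∫ x in Metric.ball (0 : EuclideanSpace ℝ (Fin d)) 1, cos (inner ℝ u x)) ^ 2
      = (2 * π) ^ d * (besselJ ((d : ℝ) / 2) ‖u‖ ^ 2 / ‖u‖ ^ d) := by
  have hr : 0 < ‖u‖ := norm_pos_iff.2 hu
  have hJ : besselJ ((d : ℝ) / 2) ‖u‖ = (‖u‖ / 2) ^ ((d : ℝ) / 2) *
      ∑' k : ℕ, ((-1 : ℝ) ^ k / (Nat.factorial k * Real.Gamma ((k : ℝ) + d / 2 + 1)) *
      (‖u‖ / 2) ^ (2 * k)) := by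
    rw [besselJ, ← tsum_mul_left]
    apply tsum_congr
    intro k
    rw [Real.rpow_add (by positivity)]
    have : (‖u‖ / 2) ^ (2 * (k : ℝ)) = (‖u‖ / 2) ^ (2 * k) := by
      rw [← Real.rpow_natCast]
      push_cast
      rfl
    rw [this]
    ring
  have hs := (aux_hasSum d hd u).tsum_eq
  rw [tsum_mul_left] at hs
  rw [← hs, hJ, mul_pow, mul_pow 2 π, mul_pow (_ ^ ((d : ℝ) / 2)), ← Real.rpow_mul_natCast (by positivity), ← pow_mul, mul_comm d 2, pow_mul,
    Real.sq_sqrt pi_pos.le]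
  have : (‖u‖ / 2) ^ ((d : ℝ) / 2 * ((2 : ℕ) : ℝ)) = (‖u‖ / 2) ^ d := by
    rw [← Real.rpow_natCast]
    congr 1
    push_cast
    ring
  rw [this, div_pow ‖u‖ 2 d]
  generalize (∑' k : ℕ, ((-1 : ℝ) ^ k / (Nat.factorial k * Real.Gamma ((k : ℝ) + d / 2 + 1)) *
      (‖u‖ / 2) ^ (2 * k))) = S
  field_simp

open FourierTransform in
lemma aux_fourier (d : ℕ) (w : EuclideanSpace ℝ (Fin d)) :
    𝓕 ((Metric.ball (0 : EuclideanSpace ℝ (Fin d)) 1).indicator (fun _ => (1 : ℂ))) w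
      = ((∫ x in Metric.ball (0 : EuclideanSpace ℝ (Fin d)) 1, cos (inner ℝ ((2 * π) • w) x) : ℝ) : ℂ) := by
  have hc : IntegrableOn (fun x : EuclideanSpace ℝ (Fin d) => cos (inner ℝ ((2 * π) • w) x)) (Metric.ball 0 1) := by
    have : IntegrableOn (fun x : EuclideanSpace ℝ (Fin d) => cos (inner ℝ ((2 * π) • w) x)) (Metric.closedBall 0 1) :=
      ContinuousOn.integrableOn_compact (isCompact_closedBall _ _) (by fun_prop)
    exact this.mono_set Metric.ball_subset_closedBall
  have hsn : IntegrableOn (fun x : EuclideanSpace ℝ (Fin d) => sin (inner ℝ ((2 * π) • w) x)) (Metric.ball 0 1) := by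
    have : IntegrableOn (fun x : EuclideanSpace ℝ (Fin d) => sin (inner ℝ ((2 * π) • w) x)) (Metric.closedBall 0 1) :=
      ContinuousOn.integrableOn_compact (isCompact_closedBall _ _) (by fun_prop)
    exact this.mono_set Metric.ball_subset_closedBall
  have hodd : ∫ x in Metric.ball (0 : EuclideanSpace ℝ (Fin d)) 1, sin (inner ℝ ((2 * π) • w) x) = 0 := by
    rw [← integral_indicator Metric.isOpen_ball.measurableSet]
    set F := (Metric.ball (0 : EuclideanSpace ℝ (Fin d)) 1).indicator (fun x => sin (inner ℝ ((2 * π) • w) x)) with hF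
    have h1 := integral_neg_eq_self F volume
    have h2 : ∀ x, F (-x) = - F x := by
      intro x
      simp only [hF, Set.indicator]
      simp only [Metric.mem_ball, dist_zero_right, norm_neg, inner_neg_right, sin_neg]
      split_ifs <;> simp
    simp_rw [h2] at h1
    rw [integral_neg] at h1
    linarith
  rw [Real.fourier_eq']
  have h1 : ∀ v : EuclideanSpace ℝ (Fin d), Complex.exp (((-2 * π * inner ℝ v w : ℝ) : ℂ) * Complex.I) •
     (Metric.ball (0 : EuclideanSpace ℝ (Fin d)) 1).indicator (fun _ => (1 : ℂ)) v
     = (Metric.ball (0 : EuclideanSpace ℝ (Fin d)) 1).indicator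
       (fun x => ((cos (inner ℝ ((2 * π) • w) x) : ℝ) : ℂ) - ((sin (inner ℝ ((2 * π) • w) x) : ℝ) : ℂ) * Complex.I) v := by
    intro v
    by_cases hv : v ∈ Metric.ball (0 : EuclideanSpace ℝ (Fin d)) 1
    · rw [Set.indicator_of_mem hv, Set.indicator_of_mem hv, smul_eq_mul, mul_one, Complex.exp_mul_I,
        ← Complex.ofReal_cos, ← Complex.ofReal_sin, real_inner_smul_left, real_inner_comm v w]
      rw [show -2 * π * inner ℝ v w = -(2 * π * inner ℝ v w) by ring, cos_neg, sin_neg]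
      push_cast
      ring
    · rw [Set.indicator_of_notMem hv, Set.indicator_of_notMem hv, smul_zero]
  rw [integral_congr_ae (Filter.Eventually.of_forall h1), integral_indicator Metric.isOpen_ball.measurableSet,
    integral_sub hc.ofReal (hsn.ofReal.mul_const _), integral_mul_const, integral_complex_ofReal,
    integral_complex_ofReal, hodd]
  simp

/-- The kernel. -/
def kerK (d : ℕ) (z : EuclideanSpace ℝ (Fin d)) : ℝ :=
  besselJ ((d : ℝ) / 2) ‖z‖ ^ 2 / ‖z‖ ^ d

open FourierTransform in
lemma aux_kerK (d : ℕ) (hd : 1 ≤ d) : Integrable (kerK d) ∧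
    ∫ z, kerK d z = volume.real (Metric.ball (0 : EuclideanSpace ℝ (Fin d)) 1) := by
  have : Nonempty (Fin d) := ⟨⟨0, hd⟩⟩
  have hfin : volume (Metric.ball (0 : EuclideanSpace ℝ (Fin d)) 1) ≠ ⊤ := measure_ball_lt_top.ne
  set f := (Metric.ball (0 : EuclideanSpace ℝ (Fin d)) 1).indicator (fun _ => (1 : ℂ)) with hf
  have h1 : Integrable f := (integrable_indicator_iff Metric.isOpen_ball.measurableSet).2
    (integrableOn_const hfin)
  have h2 : MemLp f 2 := memLp_indicator_const 2 Metric.isOpen_ball.measurableSet 1 (Or.inr hfin)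
  obtain ⟨hm, hi⟩ := aux_plancherel f h1 h2
  have hi2 : Integrable (fun w => ‖𝓕 f w‖ ^ 2) := by
    simpa using hm.integrable_norm_pow (by norm_num)
  have hae : (fun w => ‖𝓕 f w‖ ^ 2) =ᵐ[volume] fun w => (2 * π) ^ d * kerK d ((2 * π) • w) := by
    have h0 : ∀ᵐ w : EuclideanSpace ℝ (Fin d), w ≠ 0 := by
      rw [ae_iff]
      simp
    filter_upwards [h0] with w hw
    rw [hf, aux_fourier, Complex.norm_real, norm_eq_abs, sq_abs, aux_bessel d hd, kerK]
    exact smul_ne_zero (by positivity) hw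
  have hpi : (2 * π) ≠ 0 := by positivity
  have hK1 : Integrable (fun w => (2 * π) ^ d * kerK d ((2 * π) • w)) := hi2.congr hae
  have hK2 : Integrable (fun w => kerK d ((2 * π) • w)) :=
    (integrable_const_mul_iff (IsUnit.mk0 _ (pow_ne_zero d hpi)) _).1 hK1
  refine ⟨(integrable_comp_smul_iff volume (kerK d) hpi).1 hK2, ?_⟩
  have h3 := Measure.integral_comp_smul_of_nonneg (volume : Measure (EuclideanSpace ℝ (Fin d)))
    (kerK d) (2 * π) (hR := by positivity)
  rw [finrank_euclideanSpace, Fintype.card_fin, smul_eq_mul] at h3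
  rw [integral_congr_ae hae, integral_const_mul, h3, ← mul_assoc, mul_inv_cancel₀ (pow_ne_zero d hpi),
    one_mul] at hi
  rw [hi]
  have h4 : ∀ x, ‖f x‖ ^ 2 = (Metric.ball (0 : EuclideanSpace ℝ (Fin d)) 1).indicator (fun _ => (1 : ℝ)) x := by
    intro x
    simp only [hf, Set.indicator]
    split_ifs <;> simp
  rw [integral_congr_ae (Filter.Eventually.of_forall h4), integral_indicator Metric.isOpen_ball.measurableSet]
  simp

lemma aux_kerK_nonneg (d : ℕ) (z : EuclideanSpace ℝ (Fin d)) : 0 ≤ kerK d z := by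
  unfold kerK
  positivity

lemma aux_inner (d : ℕ) (c : ℝ) (hc : 0 < c) (x : EuclideanSpace ℝ (Fin d)) :
    c ^ d * ∫ y in Metric.closedBall (0 : EuclideanSpace ℝ (Fin d)) 1, kerK d (c • (x - y))
     = ∫ z, (Metric.closedBall (0 : EuclideanSpace ℝ (Fin d)) 1).indicator (fun _ => (1:ℝ)) (x - c⁻¹ • z) * kerK d z := by
  set B := Metric.closedBall (0 : EuclideanSpace ℝ (Fin d)) 1
  have hB : MeasurableSet B := Metric.isClosed_closedBall.measurableSet
  have h := Measure.integral_comp_smul_of_nonneg (volume : Measure (EuclideanSpace ℝ (Fin d)))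
    (fun z => B.indicator (fun _ => (1:ℝ)) (x - c⁻¹ • z) * kerK d z) c (hR := hc.le)
  rw [finrank_euclideanSpace, Fintype.card_fin, smul_eq_mul] at h
  have h2 := integral_sub_left_eq_self (fun z => B.indicator (fun _ => (1:ℝ)) (x - c⁻¹ • c • z) * kerK d (c • z)) volume x
  rw [h] at h2
  have h3 : ∫ y in B, kerK d (c • (x - y)) = (c ^ d)⁻¹ *
     ∫ z, B.indicator (fun _ => (1:ℝ)) (x - c⁻¹ • z) * kerK d z := by
    rw [← h2, ← integral_indicator hB]
    congr 1
    ext y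
    rw [smul_smul c⁻¹ c, inv_mul_cancel₀ hc.ne', one_smul, sub_sub_cancel]
    simp [Set.indicator]
  rw [h3, ← mul_assoc, mul_inv_cancel₀ (by positivity), one_mul]

lemma aux_inner_tendsto (d : ℕ) (hd : 1 ≤ d) (x : EuclideanSpace ℝ (Fin d)) (hx : ‖x‖ < 1) :
    Filter.Tendsto (fun c : ℝ => ∫ z, (Metric.closedBall (0 : EuclideanSpace ℝ (Fin d)) 1).indicator
      (fun _ => (1:ℝ)) (x - c⁻¹ • z) * kerK d z) Filter.atTop (nhds (∫ z, kerK d z)) := by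
  have hI := (aux_kerK d hd).1
  have hB : MeasurableSet (Metric.closedBall (0 : EuclideanSpace ℝ (Fin d)) 1) :=
    Metric.isClosed_closedBall.measurableSet
  apply tendsto_integral_filter_of_dominated_convergence (kerK d)
  · filter_upwards with c
    refine AEStronglyMeasurable.mul ?_ hI.1
    have : Measurable (fun z : EuclideanSpace ℝ (Fin d) => (Metric.closedBall (0 : EuclideanSpace ℝ (Fin d)) 1).indicator
      (fun _ => (1:ℝ)) (x - c⁻¹ • z)) := (measurable_const.indicator hB).comp (by fun_prop)
    exact this.aestronglyMeasurable
  · filter_upwards with c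
    filter_upwards with z
    rw [norm_mul, norm_of_nonneg (aux_kerK_nonneg d z)]
    refine mul_le_of_le_one_left (aux_kerK_nonneg d z) ?_
    simp only [Set.indicator]
    split_ifs <;> simp
  · exact hI
  · filter_upwards with z
    have ht : Filter.Tendsto (fun c : ℝ => x - c⁻¹ • z) Filter.atTop (nhds x) := by
      have := (tendsto_inv_atTop_zero (𝕜 := ℝ)).smul_const z
      simpa using this.const_sub x
    have hn : ∀ᶠ c : ℝ in Filter.atTop, x - c⁻¹ • z ∈ Metric.ball (0 : EuclideanSpace ℝ (Fin d)) 1 :=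
      ht.eventually (Metric.isOpen_ball.mem_nhds (by simpa using hx))
    apply tendsto_const_nhds.congr'
    filter_upwards [hn] with c hc
    rw [Set.indicator_of_mem (Metric.ball_subset_closedBall hc), one_mul]

lemma aux_main (d : ℕ) (hd : 1 ≤ d) :
    Filter.Tendsto (fun c : ℝ => c ^ d * ∫ x in Metric.closedBall (0 : EuclideanSpace ℝ (Fin d)) 1,
      ∫ y in Metric.closedBall (0 : EuclideanSpace ℝ (Fin d)) 1, kerK d (c • (x - y))) Filter.atTop
      (nhds (volume.real (Metric.ball (0 : EuclideanSpace ℝ (Fin d)) 1) ^ 2)) := by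
  have : Nonempty (Fin d) := ⟨⟨0, hd⟩⟩
  obtain ⟨hI, hV⟩ := aux_kerK d hd
  have hB : MeasurableSet (Metric.closedBall (0 : EuclideanSpace ℝ (Fin d)) 1) :=
    Metric.isClosed_closedBall.measurableSet
  have hres : (volume : Measure (EuclideanSpace ℝ (Fin d))).restrict (Metric.closedBall 0 1)
     = volume.restrict (Metric.ball 0 1) :=
    Measure.restrict_congr_set (ae_eq_of_subset_of_measure_ge Metric.ball_subset_closedBall
      (Measure.addHaar_closedBall_eq_addHaar_ball _ _ _).le
      Metric.isOpen_ball.measurableSet.nullMeasurableSet measure_closedBall_lt_top.ne).symm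
  have hlim : Filter.Tendsto (fun c : ℝ => ∫ x in Metric.ball (0 : EuclideanSpace ℝ (Fin d)) 1,
      ∫ z, (Metric.closedBall (0 : EuclideanSpace ℝ (Fin d)) 1).indicator
      (fun _ => (1:ℝ)) (x - c⁻¹ • z) * kerK d z) Filter.atTop
      (nhds (∫ x in Metric.ball (0 : EuclideanSpace ℝ (Fin d)) 1, ∫ z, kerK d z)) := by
    apply tendsto_integral_filter_of_dominated_convergence (fun _ => ∫ z, kerK d z)
    · filter_upwards with c
      apply AEStronglyMeasurable.integral_prod_right'
        (f := fun p : EuclideanSpace ℝ (Fin d) × EuclideanSpace ℝ (Fin d) =>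
          (Metric.closedBall (0 : EuclideanSpace ℝ (Fin d)) 1).indicator
            (fun _ => (1:ℝ)) (p.1 - c⁻¹ • p.2) * kerK d p.2)
      refine AEStronglyMeasurable.mul ?_ hI.1.comp_snd
      have : Measurable (fun p : EuclideanSpace ℝ (Fin d) × EuclideanSpace ℝ (Fin d) =>
          (Metric.closedBall (0 : EuclideanSpace ℝ (Fin d)) 1).indicator
            (fun _ => (1:ℝ)) (p.1 - c⁻¹ • p.2)) := (measurable_const.indicator hB).comp (by fun_prop)
      exact this.aestronglyMeasurable
    · filter_upwards with c
      filter_upwards with x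
      apply norm_integral_le_of_norm_le hI
      filter_upwards with z
      rw [norm_mul, norm_of_nonneg (aux_kerK_nonneg d z)]
      refine mul_le_of_le_one_left (aux_kerK_nonneg d z) ?_
      simp only [Set.indicator]
      split_ifs <;> simp
    · exact integrableOn_const measure_ball_lt_top.ne
    · filter_upwards [ae_restrict_mem Metric.isOpen_ball.measurableSet] with x hx
      exact aux_inner_tendsto d hd x (by simpa using hx)
  rw [setIntegral_const, hV, smul_eq_mul, ← sq] at hlim
  apply hlim.congr'
  filter_upwards [Filter.eventually_gt_atTop 0] with c hc
  rw [hres, ← integral_const_mul]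
  congr 1
  ext x
  rw [← hres, aux_inner d c hc x]

/-- Asymptotics of the squared Hilbert–Schmidt norm of `Q_c`:
`lim_{c→∞} (1/c^d)·(c²/(2π))^d·∫_{B^d}∫_{B^d} J_{d/2}(c‖x-y‖)²/(c‖x-y‖)^d dx dy
  = 1/(2^d Γ(d/2+1)²)`. -/
theorem stmt_18 (d : ℕ) (hd : 1 ≤ d) :
    Filter.Tendsto (fun c : ℝ =>
      1 / c ^ d * (c ^ 2 / (2 * Real.pi)) ^ d *
        ∫ x in Metric.closedBall (0 : EuclideanSpace ℝ (Fin d)) 1,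
          ∫ y in Metric.closedBall (0 : EuclideanSpace ℝ (Fin d)) 1,
            besselJ ((d : ℝ) / 2) (c * ‖x - y‖) ^ 2 / (c * ‖x - y‖) ^ d)
      Filter.atTop
      (nhds (1 / (2 ^ d * Real.Gamma ((d : ℝ) / 2 + 1) ^ 2))) := by
  have hNE : Nonempty (Fin d) := ⟨⟨0, hd⟩⟩
  have hG : 0 < Gamma ((d : ℝ) / 2 + 1) := Gamma_pos_of_pos (by positivity)
  have hvol : volume.real (Metric.ball (0 : EuclideanSpace ℝ (Fin d)) 1) = √π ^ d / Gamma ((d : ℝ) / 2 + 1) := by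
    rw [Measure.real, EuclideanSpace.volume_ball]
    simp only [ENNReal.ofReal_one, one_pow, one_mul, Fintype.card_fin]
    rw [ENNReal.toReal_ofReal (by positivity)]
  have h := (aux_main d hd).const_mul (((2 * π) ^ d)⁻¹)
  have hlim : ((2 * π) ^ d)⁻¹ * volume.real (Metric.ball (0 : EuclideanSpace ℝ (Fin d)) 1) ^ 2
      = 1 / (2 ^ d * Real.Gamma ((d : ℝ) / 2 + 1) ^ 2) := by
    rw [hvol, div_pow, ← pow_mul, mul_comm d 2, pow_mul, Real.sq_sqrt pi_pos.le, mul_pow]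
    field_simp
  rw [hlim] at h
  apply h.congr'
  filter_upwards [Filter.eventually_gt_atTop 0] with c hc
  have hk : ∀ x y : EuclideanSpace ℝ (Fin d), kerK d (c • (x - y)) =
      besselJ ((d : ℝ) / 2) (c * ‖x - y‖) ^ 2 / (c * ‖x - y‖) ^ d := by
    intro x y
    rw [kerK, norm_smul, norm_of_nonneg hc.le]
  simp_rw [hk]
  rw [← mul_assoc]
  congr 1
  rw [div_pow, ← pow_mul, mul_comm 2 d, pow_mul]
  field_simp

end
end
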